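/- Backward uniqueness with L² integrability: if u, v ∈ E([t₁, t₂]) are two solutions of mKdV with u, v ∈ C([t₁, t₂], L²(ℝ)) and u(t₂) = v(t₂), then u ≡ v on [t₁, t₂]. -/

import Mathlib

open MeasureTheory Set Filter Topology

noncomputable section

namespace MKdVPaper

/-- The Japanese bracket `⟨y⟩ = √(1+y²)`. -/
def jap (y : ℝ) : ℝ := Real.sqrt (1 + y ^ 2)

/-- Truncated Fourier-type integral recovering the physical function from a profile `w`:
`(1/π) Re ∫_0^R e^{i(px + p³ t)} w(p) dp`. -/
def physPartial (w : ℝ → ℂ) (t x R : ℝ) : ℝ :=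
  (1 / Real.pi) *
    (∫ p in Ioc (0 : ℝ) R, Complex.exp (Complex.I * ((p * x + p ^ 3 * t : ℝ) : ℂ)) * w p).re

/-- `u` is the physical-space function associated with the profile `w` at time `t`, i.e.
`u(x) = (1/π) Re ∫_0^∞ e^{i(px + p³t)} w(p) dp` as an improper integral. -/
def IsPhys (w : ℝ → ℂ) (t : ℝ) (u : ℝ → ℝ) : Prop :=
  ∀ x : ℝ, Tendsto (fun R => physPartial w t x R) atTop (𝓝 (u x))

/-- Sup norm of a profile. -/
def supN (w : ℝ → ℂ) : ℝ := ⨆ p : ℝ, ‖w p‖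

/-- `L²((0,∞))` norm of the derivative of the profile. -/
def dL2 (w : ℝ → ℂ) : ℝ := (eLpNorm (deriv w) 2 (volume.restrict (Ioi 0))).toReal

/-- The `E(t)` norm: `‖ũ‖_{L^∞} + t^{-1/6} ‖∂_p ũ‖_{L²((0,∞))}`. -/
def EnormP (t : ℝ) (w : ℝ → ℂ) : ℝ := supN w + t ^ (-(1 / 6 : ℝ)) * dL2 w

/-- Membership conditions for `E(t)` on the profile side: profile of a real-valued
distribution, bounded and continuous on `(0,∞)`, with derivative in `L²((0,∞))`. -/
structure MemE (w : ℝ → ℂ) : Prop where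
  symm : ∀ p : ℝ, w (-p) = starRingEnd ℂ (w p)
  cont : ContinuousOn w (Ioi 0)
  bdd : BddAbove (range fun p : ℝ => ‖w p‖)
  diff : ∀ p ∈ Ioi (0 : ℝ), DifferentiableAt ℝ w p
  derivL2 : MemLp (deriv w) 2 (volume.restrict (Ioi 0))

/-- A space-time function of class `E(I)`: a physical function `u` together with its
profile `w(t,p) = e^{-itp³} û(t,p)`. -/
structure ESol (I : Set ℝ) where
  u : ℝ → ℝ → ℝ
  w : ℝ → ℝ → ℂ
  memE : ∀ t ∈ I, MemE (w t)
  isPhys : ∀ t ∈ I, IsPhys (w t) t (u t)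
  contt : ContinuousOn (fun q : ℝ × ℝ => w q.1 q.2) (I ×ˢ Ioi 0)

/-- Finiteness of the `E(I)` norm: `sup_{t ∈ I} ‖u(t)‖_{E(t)} < ∞`. -/
def FiniteEnorm (I : Set ℝ) (sol : ESol I) : Prop :=
  BddAbove ((fun t => EnormP t (sol.w t)) '' I)

/-- Time derivative of a test function. -/
def dt1 (φ : ℝ → ℝ → ℝ) : ℝ → ℝ → ℝ := fun t x => deriv (fun s => φ s x) t

/-- Space derivative of a test function. -/
def dx1 (φ : ℝ → ℝ → ℝ) : ℝ → ℝ → ℝ := fun t x => deriv (fun y => φ t y) x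

/-- `u` is a distributional solution of `∂ₜ u + ∂ₓ³ u + ε ∂ₓ(u³) = 0` on `I × ℝ`. -/
def IsSolOn (ε : ℝ) (u : ℝ → ℝ → ℝ) (I : Set ℝ) : Prop :=
  ∀ φ : ℝ → ℝ → ℝ,
    ContDiff ℝ (⊤ : ℕ∞) (fun q : ℝ × ℝ => φ q.1 q.2) →
    HasCompactSupport (fun q : ℝ × ℝ => φ q.1 q.2) →
    tsupport (fun q : ℝ × ℝ => φ q.1 q.2) ⊆ interior I ×ˢ univ →
    (∫ q : ℝ × ℝ,
      (u q.1 q.2 * (dt1 φ q.1 q.2 + dx1 (dx1 (dx1 φ)) q.1 q.2)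
        + ε * u q.1 q.2 ^ 3 * dx1 φ q.1 q.2)) = 0

/-- Self-similar solution: `S(t,x) = t^{-1/3} V(t^{-1/3} x)`. -/
def SelfSimilar {I : Set ℝ} (S : ESol I) : Prop :=
  ∃ V : ℝ → ℝ, ∀ t ∈ I, ∀ x : ℝ,
    S.u t x = t ^ (-(1 / 3 : ℝ)) * V (t ^ (-(1 / 3 : ℝ)) * x)

/-- The Fourier transform at time 1 recovered from the profile: `û(1,p) = e^{ip³} ũ(1,p)`. -/
def hatAtOne (w : ℝ → ℂ) : ℝ → ℂ := fun p => Complex.exp (Complex.I * ((p ^ 3 : ℝ) : ℂ)) * w p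

/-- The Fourier transforms at time 1 have the same limit at frequency `0⁺`. -/
def SameZeroLimit (w₁ w₂ : ℝ → ℂ) : Prop :=
  ∃ c : ℂ, Tendsto (hatAtOne w₁) (𝓝[>] (0 : ℝ)) (𝓝 c) ∧
    Tendsto (hatAtOne w₂) (𝓝[>] (0 : ℝ)) (𝓝 c)

/-- Truncated Airy–Fock integral. -/
def AiP (z R : ℝ) : ℂ :=
  ((1 / Real.pi : ℝ) : ℂ) *
    ∫ p in Ioc (0 : ℝ) R, Complex.exp (Complex.I * ((p * z + p ^ 3 : ℝ) : ℂ))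

/-- The Airy–Fock function `Ai(z) = (1/π)∫_0^∞ e^{i(pz+p³)} dp` (improper integral). -/
def AiFock (z : ℝ) : ℂ := limUnder atTop fun R => AiP z R

end MKdVPaper
namespace MKdVPaper

/-- `u : I → L²(ℝ)` continuously. -/
def ContInL2 (I : Set ℝ) (u : ℝ → ℝ → ℝ) : Prop :=
  (∀ t ∈ I, MemLp (u t) 2 (volume : Measure ℝ)) ∧
  ∀ t ∈ I, Tendsto (fun s => eLpNorm (fun x => u s x - u t x) 2 (volume : Measure ℝ))
    (𝓝[I] t) (𝓝 0)

lemma integral_lorentz_le {m p₀ a b : ℝ} (hm : 0 < m) (hab : a ≤ b) :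
    ∫ p in a..b, (1 + m * (p - p₀) ^ 2)⁻¹ ≤ Real.pi / √m := by
  have hsm : 0 < √m := Real.sqrt_pos.2 hm
  have e : ∀ p : ℝ, (1 + m * (p - p₀) ^ 2)⁻¹
      = (fun y : ℝ => (1 + y ^ 2)⁻¹) (√m * p - √m * p₀) := by
    intro p
    simp only
    rw [← mul_sub, mul_pow, Real.sq_sqrt hm.le]
  simp_rw [e]
  rw [intervalIntegral.integral_comp_mul_sub (fun y : ℝ => (1 + y ^ 2)⁻¹) hsm.ne',
    intervalIntegral.integral_of_le (by gcongr), smul_eq_mul, div_eq_inv_mul,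
    ← integral_univ_inv_one_add_sq]
  exact mul_le_mul_of_nonneg_left (setIntegral_le_integral integrable_inv_one_add_sq
    (Eventually.of_forall fun y => by positivity)) (by positivity)

/-- Oscillatory integral bound near a (possibly degenerate) stationary point `p₀` of the phase
`p x + p³ t`, obtained by integrating by parts against `(p - p₀) e^{iΦ} / (1 + i (p - p₀) Φ')`. -/
lemma norm_oscillatory_integral_le {x t p₀ a b m M N κ : ℝ} (hab : a ≤ b) (hm : 1 ≤ m)
    (hM : 0 ≤ M) (hκ : 0 ≤ κ) {w w' r r' : ℝ → ℂ}
    (hw : ∀ p ∈ Icc a b, HasDerivAt w (w' p) p) (hr : ∀ p, HasDerivAt r (r' p) p)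
    (hrc : Continuous r')
    (hwM : ∀ p ∈ Icc a b, ‖w p‖ ≤ M) (hw'i : IntervalIntegrable w' volume a b)
    (hw'2 : IntervalIntegrable (fun p => ‖w' p‖ ^ 2) volume a b)
    (hN : ∫ p in a..b, ‖w' p‖ ^ 2 ≤ N)
    (hrD : ∀ p ∈ Icc a b, ‖r p‖ ≤ κ * (1 + m * (p - p₀) ^ 2)⁻¹ *
      ‖(1 + Complex.I * (((p - p₀) * (x + 3 * t * p ^ 2) : ℝ) : ℂ) : ℂ)‖)
    (hrD' : ∀ p ∈ Icc a b, |p - p₀| * ‖r' p‖ ≤ κ * (1 + m * (p - p₀) ^ 2)⁻¹ *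
      ‖(1 + Complex.I * (((p - p₀) * (x + 3 * t * p ^ 2) : ℝ) : ℂ) : ℂ)‖)
    (hθ : ∀ p ∈ Icc a b, |(p - p₀) * (x + 3 * t * p ^ 2 + (p - p₀) * (6 * t * p))|
      ≤ 3 * |(p - p₀) * (x + 3 * t * p ^ 2)|) :
    ‖∫ p in a..b, Complex.exp (Complex.I * ((p * x + p ^ 3 * t : ℝ) : ℂ)) * (r p * w p)‖
      ≤ κ / √m * (M + (4 * M + 1) * Real.pi + N) := by
  set D : ℝ → ℂ := fun p => 1 + Complex.I * (((p - p₀) * (x + 3 * t * p ^ 2) : ℝ) : ℂ) with hD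
  set e : ℝ → ℂ := fun p => Complex.exp (Complex.I * ((p * x + p ^ 3 * t : ℝ) : ℂ)) with he
  set d : ℝ → ℂ := fun p =>
    Complex.I * ((x + 3 * t * p ^ 2 + (p - p₀) * (6 * t * p) : ℝ) : ℂ) with hd
  set K : ℝ → ℝ := fun p => (1 + m * (p - p₀) ^ 2)⁻¹ with hK
  set G : ℝ → ℂ := fun p => ((p - p₀ : ℝ) : ℂ) * e p / D p with hG
  set G' : ℝ → ℂ := fun p => e p - ((p - p₀ : ℝ) : ℂ) * d p / D p ^ 2 * e p with hG'
  have hm0 : 0 < m := by linarith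
  have hsm : 1 ≤ √m := Real.one_le_sqrt.2 hm
  have hsm2 : √m ^ 2 = m := Real.sq_sqrt hm0.le
  have hD1 : ∀ p, 1 ≤ ‖D p‖ := fun p => by
    have := Complex.abs_re_le_norm (D p)
    have h2 : (D p).re = 1 := by
      simp [hD, -Complex.ofReal_mul, -Complex.ofReal_add, -Complex.ofReal_sub]
    rwa [h2, abs_one] at this
  have hD2 : ∀ p, |(p - p₀) * (x + 3 * t * p ^ 2)| ≤ ‖D p‖ := fun p => by
    have := Complex.abs_im_le_norm (D p)
    have h2 : (D p).im = (p - p₀) * (x + 3 * t * p ^ 2) := by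
      simp [hD, -Complex.ofReal_mul, -Complex.ofReal_add, -Complex.ofReal_sub]
    rwa [h2] at this
  have hD0 : ∀ p, D p ≠ 0 := fun p h => by have := hD1 p; rw [h] at this; norm_num at this
  have hen : ∀ p, ‖e p‖ = 1 := fun p => by
    rw [he]; simp only; rw [mul_comm]; exact Complex.norm_exp_ofReal_mul_I _
  have hKpos : ∀ p, 0 < K p := fun p => by simp only [hK]; positivity
  have hsK : ∀ p, |p - p₀| * K p ≤ 1 / (2 * √m) := fun p => by
    simp only [hK]
    rw [← div_eq_mul_inv, div_le_div_iff₀ (by positivity) (by positivity)]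
    nlinarith [sq_nonneg (√m * |p - p₀| - 1), sq_abs (p - p₀)]
  have hec : Continuous e := by fun_prop
  have hDc : Continuous D := by fun_prop
  have hdc : Continuous d := by fun_prop
  have hKc : Continuous K := by
    refine Continuous.inv₀ (by fun_prop) fun p => by positivity
  have hG'c : Continuous G' := by
    refine hec.sub (Continuous.mul (Continuous.div (by fun_prop) (by fun_prop) ?_) hec)
    exact fun p => pow_ne_zero _ (hD0 p)
  have hGc : Continuous G := Continuous.div (by fun_prop) hDc hD0
  have hrc0 : Continuous r := continuous_iff_continuousAt.2 fun p => (hr p).continuousAt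
  have hGd : ∀ p, HasDerivAt G (G' p) p := by
    intro p
    have h1 : HasDerivAt (fun p : ℝ => ((p - p₀ : ℝ) : ℂ)) 1 p := by
      simpa using ((hasDerivAt_id p).sub_const p₀).ofReal_comp
    have h2 : HasDerivAt (fun p : ℝ => p * x + p ^ 3 * t) (x + 3 * t * p ^ 2) p := by
      refine (((hasDerivAt_id p).mul_const x).add
        ((hasDerivAt_pow 3 p).mul_const t)).congr_deriv ?_
      norm_num; ring
    have h3 : HasDerivAt e (e p * (Complex.I * ((x + 3 * t * p ^ 2 : ℝ) : ℂ))) p :=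
      (h2.ofReal_comp.const_mul Complex.I).cexp
    have h4 : HasDerivAt (fun p : ℝ => (p - p₀) * (x + 3 * t * p ^ 2))
        (x + 3 * t * p ^ 2 + (p - p₀) * (6 * t * p)) p := by
      refine (((hasDerivAt_id p).sub_const p₀).mul
        (((hasDerivAt_pow 2 p).const_mul (3 * t)).const_add x)).congr_deriv ?_
      simp only [id]
      push_cast
      ring
    have h5 : HasDerivAt D (d p) p := (h4.ofReal_comp.const_mul Complex.I).const_add 1
    refine ((h1.mul h3).div h5 (hD0 p)).congr_deriv ?_
    have := hD0 p
    simp only [hG', Pi.mul_apply]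
    field_simp
    simp only [hD]
    push_cast
    ring
  have hwc : ContinuousOn w (uIcc a b) := by
    rw [uIcc_of_le hab]
    exact fun p hp => (hw p hp).continuousAt.continuousWithinAt
  have hrw : ∀ p ∈ uIcc a b, HasDerivAt (fun p => r p * w p) (r' p * w p + r p * w' p) p := by
    intro p hp
    rw [uIcc_of_le hab] at hp
    exact (hr p).mul (hw p hp)
  have hfi : IntervalIntegrable (fun p => r' p * w p + r p * w' p) volume a b :=
    ((hrc.continuousOn.mul hwc).intervalIntegrable).add (hw'i.continuousOn_mul hrc0.continuousOn)
  have ibp := intervalIntegral.integral_deriv_mul_eq_sub (a := a) (b := b) (u := G)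
    (v := fun p => r p * w p)
    (fun p _ => hGd p) hrw (hG'c.intervalIntegrable _ _) hfi
  set R : ℝ → ℂ := fun p => ((p - p₀ : ℝ) : ℂ) * d p / D p ^ 2 * e p * (r p * w p)
    - G p * (r' p * w p + r p * w' p) with hR
  have hsplit : ∀ p, e p * (r p * w p)
      = (G' p * (r p * w p) + G p * (r' p * w p + r p * w' p)) + R p := fun p => by
    simp only [hR, hG']; ring
  have hrwi : ContinuousOn (fun p => r p * w p) (uIcc a b) := hrc0.continuousOn.mul hwc
  have hGf : IntervalIntegrable (fun p => G p * (r' p * w p + r p * w' p)) volume a b :=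
    hfi.continuousOn_mul hGc.continuousOn
  have hRi : IntervalIntegrable R volume a b := by
    refine IntervalIntegrable.sub (ContinuousOn.intervalIntegrable (ContinuousOn.mul ?_ hrwi)) hGf
    refine Continuous.continuousOn (Continuous.mul (Continuous.div (by fun_prop) (by fun_prop) ?_)
      hec)
    exact fun p => pow_ne_zero _ (hD0 p)
  have hI : ∫ p in a..b, e p * (r p * w p)
      = (G b * (r b * w b) - G a * (r a * w a)) + ∫ p in a..b, R p := by
    simp_rw [hsplit]
    rw [intervalIntegral.integral_add _ hRi, ibp]
    exact ((hG'c.continuousOn.mul hrwi).intervalIntegrable).add hGf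
  have hGn : ∀ p, ‖G p‖ = |p - p₀| / ‖D p‖ := fun p => by
    simp only [hG, norm_div, norm_mul, hen, Complex.norm_real, Real.norm_eq_abs, mul_one]
  have hrD2 : ∀ p ∈ Icc a b, ‖r p‖ / ‖D p‖ ≤ κ * K p := fun p hp => by
    rw [div_le_iff₀ (by linarith [hD1 p])]; exact hrD p hp
  have hrD2' : ∀ p ∈ Icc a b, |p - p₀| * ‖r' p‖ / ‖D p‖ ≤ κ * K p := fun p hp => by
    rw [div_le_iff₀ (by linarith [hD1 p])]; exact hrD' p hp
  have hbd : ∀ p ∈ Icc a b, ‖G p * (r p * w p)‖ ≤ κ * M / (2 * √m) := by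
    intro p hp
    calc ‖G p * (r p * w p)‖ = |p - p₀| * (‖r p‖ / ‖D p‖) * ‖w p‖ := by
          rw [norm_mul, norm_mul, hGn]; ring
      _ ≤ |p - p₀| * (κ * K p) * M := by
          have := hKpos p
          gcongr
          · exact hrD2 p hp
          · exact hwM p hp
      _ = (|p - p₀| * K p) * (κ * M) := by ring
      _ ≤ 1 / (2 * √m) * (κ * M) := by gcongr; exact hsK p
      _ = _ := by ring
  have hRb : ∀ p ∈ Icc a b, ‖R p‖ ≤ κ * ((4 * M + 1) * K p + 1 / √m * ‖w' p‖ ^ 2) := by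
    intro p hp
    have hDp : 0 < ‖D p‖ := by linarith [hD1 p]
    have k0 := hKpos p
    have b1 : ‖((p - p₀ : ℝ) : ℂ) * d p / D p ^ 2 * e p * (r p * w p)‖ ≤ 3 * (κ * K p) * M := by
      calc _ = |(p - p₀) * (x + 3 * t * p ^ 2 + (p - p₀) * (6 * t * p))| / ‖D p‖
            * (‖r p‖ / ‖D p‖) * ‖w p‖ := by
            simp only [hd, norm_mul, norm_div, norm_pow, hen, Complex.norm_real, Complex.norm_I,
              Real.norm_eq_abs, abs_mul]
            field_simp
        _ ≤ 3 * (κ * K p) * M := by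
            gcongr
            · rw [div_le_iff₀ hDp]
              exact (hθ p hp).trans (by gcongr; exact hD2 p)
            · exact hrD2 p hp
            · exact hwM p hp
    have b2 : ‖G p * (r' p * w p)‖ ≤ κ * K p * M := by
      calc _ = (|p - p₀| * ‖r' p‖ / ‖D p‖) * ‖w p‖ := by
            rw [norm_mul, norm_mul, hGn]; ring
        _ ≤ _ := by
            gcongr
            · exact hrD2' p hp
            · exact hwM p hp
    have b3 : ‖G p * (r p * w' p)‖ ≤ κ * (K p + 1 / √m * ‖w' p‖ ^ 2) := by
      have c1 : |p - p₀| * K p * ‖w' p‖ ≤ K p + 1 / √m * ‖w' p‖ ^ 2 := by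
        have c2 : √m * (|p - p₀| * K p) ^ 2 ≤ K p := by
          have c3 : m * (p - p₀) ^ 2 * K p ≤ 1 := by
            simp only [hK]
            rw [← div_eq_mul_inv, div_le_one (by positivity)]
            linarith
          have c4 : √m * (p - p₀) ^ 2 * K p ≤ 1 := by
            refine le_trans ?_ c3
            gcongr
            nlinarith
          calc √m * (|p - p₀| * K p) ^ 2 = (√m * (p - p₀) ^ 2 * K p) * K p := by
                rw [mul_pow, sq_abs]; ring
            _ ≤ 1 * K p := by gcongr
            _ = K p := one_mul _
        have c5 : |p - p₀| * K p * ‖w' p‖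
            ≤ √m * (|p - p₀| * K p) ^ 2 + 1 / √m * ‖w' p‖ ^ 2 := by
          have hs0 : 0 < √m := by linarith
          have : √m * (|p - p₀| * K p) ^ 2 + 1 / √m * ‖w' p‖ ^ 2
              - |p - p₀| * K p * ‖w' p‖
              = 1 / √m * ((√m * (|p - p₀| * K p) - ‖w' p‖ / 2) ^ 2 + 3 / 4 * ‖w' p‖ ^ 2) := by
            field_simp; ring
          have h0 : 0 ≤ 1 / √m *
              ((√m * (|p - p₀| * K p) - ‖w' p‖ / 2) ^ 2 + 3 / 4 * ‖w' p‖ ^ 2) := by positivity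
          linarith
        linarith
      calc _ = |p - p₀| * (‖r p‖ / ‖D p‖) * ‖w' p‖ := by
            rw [norm_mul, norm_mul, hGn]; ring
        _ ≤ |p - p₀| * (κ * K p) * ‖w' p‖ := by gcongr; exact hrD2 p hp
        _ = κ * (|p - p₀| * K p * ‖w' p‖) := by ring
        _ ≤ _ := by gcongr
    have : R p = ((p - p₀ : ℝ) : ℂ) * d p / D p ^ 2 * e p * (r p * w p)
        - (G p * (r' p * w p) + G p * (r p * w' p)) := by simp only [hR]; ring
    rw [this]
    refine (norm_sub_le _ _).trans ((add_le_add b1 ((norm_add_le _ _).trans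
      (add_le_add b2 b3))).trans (le_of_eq ?_))
    ring
  have hKi : IntervalIntegrable K volume a b := hKc.intervalIntegrable _ _
  have hint : ‖∫ p in a..b, R p‖ ≤ κ * ((4 * M + 1) * (Real.pi / √m) + 1 / √m * N) := by
    refine (intervalIntegral.norm_integral_le_of_norm_le hab
      (Eventually.of_forall fun p hp => hRb p (Ioc_subset_Icc_self hp))
      (((hKi.const_mul _).add (hw'2.const_mul _)).const_mul _)).trans ?_
    rw [intervalIntegral.integral_const_mul, intervalIntegral.integral_add (hKi.const_mul _)
      (hw'2.const_mul _), intervalIntegral.integral_const_mul, intervalIntegral.integral_const_mul]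
    gcongr
    exact integral_lorentz_le hm0 hab
  rw [hI]
  refine (norm_add_le _ _).trans ((add_le_add ((norm_sub_le _ _).trans (add_le_add
    (hbd b ⟨hab, le_rfl⟩) (hbd a ⟨le_rfl, hab⟩))) hint).trans (le_of_eq ?_))
  field_simp
  ring
lemma integral_norm_sq_eq (w : ℝ → ℂ) (h : MemLp w 2 (volume.restrict (Ioi 0))) :
   ∫ p in Ioi (0:ℝ), ‖w p‖ ^ 2 = ((eLpNorm w 2 (volume.restrict (Ioi 0))).toReal) ^ 2 := by
  rw [h.eLpNorm_eq_integral_rpow_norm (by norm_num) (by norm_num)]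
  rw [ENNReal.toReal_ofReal (by positivity)]
  have : 0 ≤ ∫ p in Ioi (0:ℝ), ‖w p‖ ^ 2 := by positivity
  rw [← Real.rpow_natCast, ← Real.rpow_mul (by positivity)]
  simp

/-- Lower bounds for `1 + |θ|`, with `θ = (p - p₀) (x + 3 t p²)`, around the stationary point. -/
lemma phase_bounds {t₁ t q p x p₀ : ℝ} (ht₁ : 0 < t₁) (ht : t₁ ≤ t) (hq : 0 ≤ q) (hp : 0 ≤ p)
    (hx : (x = -(3 * t * q ^ 2) ∧ p₀ = q) ∨ (x = 3 * t * q ^ 2 ∧ p₀ = 0)) :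
    min 1 t₁ * ((p - p₀) ^ 2 * (q + |p - p₀|)) ≤ |(p - p₀) * (x + 3 * t * p ^ 2)| ∧
    |(p - p₀) * (x + 3 * t * p ^ 2 + (p - p₀) * (6 * t * p))|
      ≤ 3 * |(p - p₀) * (x + 3 * t * p ^ 2)| ∧ p ≤ q + |p - p₀| := by
  have ht0 : 0 < t := ht₁.trans_le ht
  have hmin : min 1 t₁ ≤ t := (min_le_right _ _).trans ht
  rcases hx with ⟨rfl, rfl⟩ | ⟨rfl, rfl⟩
  · have hs : |p - p₀| ≤ p + p₀ := abs_le.2 ⟨by linarith, by linarith⟩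
    have e1 : (p - p₀) * (-(3 * t * p₀ ^ 2) + 3 * t * p ^ 2)
        = 3 * t * ((p - p₀) ^ 2 * (p + p₀)) := by ring
    have e2 : (p - p₀) * (-(3 * t * p₀ ^ 2) + 3 * t * p ^ 2 + (p - p₀) * (6 * t * p))
        = 3 * t * ((p - p₀) ^ 2 * (3 * p + p₀ )) := by ring
    rw [e1, e2, abs_of_nonneg (show 0 ≤ 3 * t * ((p - p₀) ^ 2 * (p + p₀)) by positivity),
      abs_of_nonneg (show 0 ≤ 3 * t * ((p - p₀) ^ 2 * (3 * p + p₀)) by positivity)]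
    refine ⟨?_, ?_, ?_⟩
    · calc _ ≤ t * ((p - p₀) ^ 2 * (3 * (p + p₀))) := by
            gcongr
            linarith [abs_le.1 hs]
        _ = _ := by ring
    · have : 3 * (3 * t * ((p - p₀) ^ 2 * (p + p₀)))
          = 3 * t * ((p - p₀) ^ 2 * (3 * (p + p₀))) := by ring
      rw [this]; gcongr; linarith
    · linarith [le_abs_self (p - p₀)]
  · have e1 : (p - 0) * (3 * t * q ^ 2 + 3 * t * p ^ 2) = 3 * t * (p * (q ^ 2 + p ^ 2)) := by ring
    have e2 : (p - 0) * (3 * t * q ^ 2 + 3 * t * p ^ 2 + (p - 0) * (6 * t * p))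
        = 3 * t * (p * (q ^ 2 + 3 * p ^ 2)) := by ring
    rw [e1, e2, abs_of_nonneg (show 0 ≤ 3 * t * (p * (q ^ 2 + p ^ 2)) by positivity),
      abs_of_nonneg (show 0 ≤ 3 * t * (p * (q ^ 2 + 3 * p ^ 2)) by positivity), sub_zero,
      abs_of_nonneg hp]
    refine ⟨?_, ?_, by linarith⟩
    · calc _ ≤ t * (p ^ 2 * (q + p)) := by gcongr
        _ = t * (p * (p * (q + p))) := by ring
        _ ≤ t * (p * (3 * (q ^ 2 + p ^ 2))) :=
            mul_le_mul_of_nonneg_left (mul_le_mul_of_nonneg_left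
              (by nlinarith [sq_nonneg (q - p)]) hp) ht0.le
        _ = _ := by ring
    · have : 3 * (3 * t * (p * (q ^ 2 + p ^ 2))) = 3 * t * (p * (3 * (q ^ 2 + p ^ 2))) := by ring
      rw [this]; gcongr; nlinarith [sq_nonneg q]

lemma weight_bounds {c q s p D Θ : ℝ} (hc : 0 < c) (hc1 : c ≤ 1) (hq : 0 ≤ q)
    (h1 : c * (s ^ 2 * (q + |s|)) ≤ Θ) (hp : p ≤ q + |s|) (hD1 : 1 ≤ D) (hDΘ : Θ ≤ D) :
    1 ≤ 8 / c * (1 + (1 + q) * s ^ 2)⁻¹ * D ∧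
    p ≤ 8 / c * (1 + q) * (1 + (1 + q) * s ^ 2)⁻¹ * D ∧
    |s| ≤ 8 / c * (1 + q) * (1 + (1 + q) * s ^ 2)⁻¹ * D := by
  have hs := abs_nonneg s
  have hs2 : s ^ 2 = |s| ^ 2 := (sq_abs s).symm
  rw [hs2] at h1 ⊢
  generalize |s| = σ at *
  have hn : 1 + (1 + q + σ) * σ ^ 2 ≤ 4 / c * D := by
    have a1 : (1 + q + σ) * σ ^ 2 ≤ 1 + 2 * (σ ^ 2 * (q + σ)) := by
      have : σ ^ 2 ≤ 1 + σ ^ 3 := by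
        rcases le_total σ 1 with h | h
        · nlinarith [pow_nonneg hs 3]
        · nlinarith [pow_nonneg hs 2]
      nlinarith [mul_nonneg (pow_nonneg hs 2) hq]
    rw [div_mul_eq_mul_div, le_div_iff₀ hc]
    nlinarith
  have hpos : 0 < 1 + (1 + q) * σ ^ 2 := by positivity
  have h8 : 8 / c = 2 * (4 / c) := by ring
  have hσ2 : σ ≤ 1 + σ ^ 2 := by nlinarith
  have key : (1 + q + σ) ≤ 8 / c * (1 + q) * (1 + (1 + q) * σ ^ 2)⁻¹ * D := by
    have : 8 / c * (1 + q) * (1 + (1 + q) * σ ^ 2)⁻¹ * D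
        = (2 * (1 + q) * (4 / c * D)) / (1 + (1 + q) * σ ^ 2) := by rw [h8]; field_simp
    rw [this, le_div_iff₀ hpos]
    refine le_trans ?_ (mul_le_mul_of_nonneg_left hn (by positivity))
    have a : σ ^ 2 ≤ (1 + q) * ((1 + q + σ) * σ ^ 2) := by
      nlinarith [mul_nonneg hq (pow_nonneg hs 2), mul_nonneg hq hq,
        mul_nonneg (mul_nonneg hq hq) (pow_nonneg hs 2), pow_nonneg hs 3,
        mul_nonneg hq (pow_nonneg hs 3)]
    nlinarith
  refine ⟨?_, by linarith, by linarith⟩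
  have : 8 / c * (1 + (1 + q) * σ ^ 2)⁻¹ * D = (2 * (4 / c * D)) / (1 + (1 + q) * σ ^ 2) := by
    rw [h8]; field_simp
  rw [this, le_div_iff₀ hpos]
  nlinarith [pow_nonneg hs 3]

lemma exists_stationary {x t : ℝ} (ht : 0 < t) :
    ∃ p₀, (x = -(3 * t * √(|x| / (3 * t)) ^ 2) ∧ p₀ = √(|x| / (3 * t))) ∨
      (x = 3 * t * √(|x| / (3 * t)) ^ 2 ∧ p₀ = 0) := by
  have h : 3 * t * √(|x| / (3 * t)) ^ 2 = |x| := by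
    rw [Real.sq_sqrt (by positivity)]; field_simp
  rw [h]
  rcases le_total x 0 with hx | hx
  · exact ⟨_, Or.inl ⟨by rw [abs_of_nonpos hx]; ring, rfl⟩⟩
  · exact ⟨_, Or.inr ⟨(abs_of_nonneg hx).symm, rfl⟩⟩

/-- The constant in the dispersive bounds. -/
def dispConst (t₁ M N : ℝ) : ℝ := 8 / min 1 t₁ * (M + (4 * M + 1) * Real.pi + N)

lemma setIntegral_le_of_forall_interval {F : ℝ → ℂ} {R B X : ℝ} (hR : 0 < R)
    (hF : IntegrableOn F (Ioc 0 R)) (hB : ∀ p ∈ Ioc (0 : ℝ) R, ‖F p‖ ≤ B)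
    (h : ∀ a, 0 < a → a ≤ R → ‖∫ p in a..R, F p‖ ≤ X) : ‖∫ p in Ioc (0 : ℝ) R, F p‖ ≤ X := by
  have hB0 : 0 ≤ B := (norm_nonneg _).trans (hB R ⟨hR, le_rfl⟩)
  refine le_of_forall_pos_le_add fun η hη => ?_
  set a := min R (η / (B + 1)) with ha
  have ha0 : 0 < a := lt_min hR (by positivity)
  have haR : a ≤ R := min_le_left _ _
  have i1 : IntervalIntegrable F volume 0 a :=
    (intervalIntegrable_iff_integrableOn_Ioc_of_le ha0.le).2
      (hF.mono_set (Ioc_subset_Ioc_right haR))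
  have i2 : IntervalIntegrable F volume a R :=
    (intervalIntegrable_iff_integrableOn_Ioc_of_le haR).2
      (hF.mono_set (Ioc_subset_Ioc_left ha0.le))
  rw [← intervalIntegral.integral_of_le hR.le,
    ← intervalIntegral.integral_add_adjacent_intervals i1 i2, add_comm]
  refine (norm_add_le _ _).trans (add_le_add (h a ha0 haR) ?_)
  have := intervalIntegral.norm_integral_le_of_norm_le_const (a := 0) (b := a) (f := F) (C := B)
    (fun p hp => by
      rw [uIoc_of_le ha0.le] at hp
      exact hB p ⟨hp.1, hp.2.trans haR⟩)
  refine this.trans ?_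
  rw [sub_zero, abs_of_pos ha0]
  calc B * a ≤ (B + 1) * (η / (B + 1)) := by gcongr; linarith; exact min_le_right _ _
    _ = η := by field_simp

lemma MemE.integrableOn_mul {w : ℝ → ℂ} (hw : MemE w) {f : ℝ → ℂ} (hf : Continuous f) (R : ℝ) :
    IntegrableOn (fun p => f p * w p) (Ioc 0 R) := by
  obtain ⟨M, hM⟩ := hw.bdd
  refine Integrable.mul_bdd (c := M) ?_ ?_ ?_
  · exact (hf.integrableOn_Icc).mono_set Ioc_subset_Icc_self
  · exact (hw.cont.mono Ioc_subset_Ioi_self).aestronglyMeasurable measurableSet_Ioc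
  · exact Eventually.of_forall fun p => hM ⟨p, rfl⟩

lemma MemE.dispersive {t₁ M N t : ℝ} (ht₁ : 0 < t₁) (ht : t₁ ≤ t) {w : ℝ → ℂ} (hw : MemE w)
    (hM : ∀ p, ‖w p‖ ≤ M) (hN : dL2 w ^ 2 ≤ N) (x R : ℝ) :
    ‖∫ p in Ioc (0 : ℝ) R, Complex.exp (Complex.I * ((p * x + p ^ 3 * t : ℝ) : ℂ)) * w p‖
      ≤ dispConst t₁ M N / √(1 + √(|x| / (3 * t))) ∧
    ‖∫ p in Ioc (0 : ℝ) R,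
        Complex.exp (Complex.I * ((p * x + p ^ 3 * t : ℝ) : ℂ)) * (p * w p)‖
      ≤ dispConst t₁ M N * √(1 + √(|x| / (3 * t))) := by
  have ht0 : 0 < t := ht₁.trans_le ht
  have hM0 : 0 ≤ M := (norm_nonneg _).trans (hM 0)
  have hN0 : 0 ≤ N := (sq_nonneg _).trans hN
  obtain ⟨p₀, hp₀⟩ := exists_stationary (x := x) ht0
  set q := √(|x| / (3 * t)) with hq
  have hq0 : 0 ≤ q := Real.sqrt_nonneg _
  have hc0 : 0 < min 1 t₁ := lt_min one_pos ht₁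
  have hC0 : 0 ≤ dispConst t₁ M N := by unfold dispConst; positivity
  rcases le_or_gt R 0 with hR | hR
  · simp only [Ioc_eq_empty (not_lt.2 hR), Measure.restrict_empty, integral_zero_measure, norm_zero]
    constructor <;> positivity
  have hsq : 0 < √(1 + q) := Real.sqrt_pos.2 (by linarith)
  have hsq2 : √(1 + q) ^ 2 = 1 + q := Real.sq_sqrt (by linarith)
  have hpt : ∀ a, 0 < a → ∀ p ∈ Icc a R, _ := fun a ha p hp =>
    phase_bounds (p := p) ht₁ ht hq0 (ha.le.trans hp.1) hp₀
  have hD : ∀ a, 0 < a → ∀ p ∈ Icc a R, _ := fun a ha p hp =>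
    weight_bounds (p := p) (s := p - p₀)
      (D := ‖(1 + Complex.I * (((p - p₀) * (x + 3 * t * p ^ 2) : ℝ) : ℂ) : ℂ)‖)
      hc0 (min_le_left _ _) hq0 (hpt a ha p hp).1 (hpt a ha p hp).2.2
      (by
        have := Complex.abs_re_le_norm
          (1 + Complex.I * (((p - p₀) * (x + 3 * t * p ^ 2) : ℝ) : ℂ) : ℂ)
        simpa [-Complex.ofReal_mul, -Complex.ofReal_add, -Complex.ofReal_sub] using this)
      (by
        have := Complex.abs_im_le_norm
          (1 + Complex.I * (((p - p₀) * (x + 3 * t * p ^ 2) : ℝ) : ℂ) : ℂ)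
        simpa only [Complex.add_im, Complex.one_im, Complex.mul_im, Complex.I_re, Complex.I_im,
          Complex.ofReal_re, Complex.ofReal_im, zero_mul, one_mul, zero_add] using this)
  have hwd : ∀ a, 0 < a → ∀ p ∈ Icc a R, HasDerivAt w (deriv w p) p := fun a ha p hp =>
    (hw.diff p (ha.trans_le hp.1)).hasDerivAt
  have hsub : ∀ a, 0 < a → Ioc a R ⊆ Ioi 0 := fun a ha p hp => ha.trans hp.1
  have h1i : ∀ a, 0 < a → a ≤ R → IntervalIntegrable (deriv w) volume a R := fun a ha haR => by
    rw [intervalIntegrable_iff_integrableOn_Ioc_of_le haR]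
    exact (hw.derivL2.mono_measure (Measure.restrict_mono (hsub a ha) le_rfl)).integrable
      (by norm_num)
  have h2I : IntegrableOn (fun p => ‖deriv w p‖ ^ 2) (Ioi 0) :=
    hw.derivL2.integrable_norm_pow (by norm_num)
  have h2i : ∀ a, 0 < a → a ≤ R → IntervalIntegrable (fun p => ‖deriv w p‖ ^ 2) volume a R :=
    fun a ha haR => by
      rw [intervalIntegrable_iff_integrableOn_Ioc_of_le haR]
      exact h2I.mono_set (hsub a ha)
  have h2N : ∀ a, 0 < a → a ≤ R → ∫ p in a..R, ‖deriv w p‖ ^ 2 ≤ N := fun a ha haR => by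
    rw [intervalIntegral.integral_of_le haR]
    refine (setIntegral_mono_set h2I (Eventually.of_forall fun p => by positivity)
      (hsub a ha).eventuallyLE).trans ?_
    rw [integral_norm_sq_eq _ hw.derivL2]
    exact hN
  have hen : ∀ p, ‖Complex.exp (Complex.I * ((p * x + p ^ 3 * t : ℝ) : ℂ))‖ = 1 := fun p => by
    rw [mul_comm]; exact Complex.norm_exp_ofReal_mul_I _
  constructor
  · refine setIntegral_le_of_forall_interval (B := M) hR
      (hw.integrableOn_mul (by fun_prop) R) (fun p _ => ?_) fun a ha haR => ?_
    · rw [norm_mul, hen, one_mul]; exact hM p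
    · have := norm_oscillatory_integral_le (x := x) (t := t) (p₀ := p₀) (κ := 8 / min 1 t₁)
        (m := 1 + q) (r := fun _ => 1) (r' := fun _ => 0) haR (by linarith) hM0 (by positivity)
        (hwd a ha) (fun p => hasDerivAt_const _ _) continuous_const (fun p _ => hM p)
        (h1i a ha haR) (h2i a ha haR) (h2N a ha haR)
        (fun p hp => by simpa only [norm_one] using (hD a ha p hp).1)
        (fun p hp => by rw [norm_zero, mul_zero]; positivity)
        (fun p hp => (hpt a ha p hp).2.1)
      simp only [one_mul] at this
      refine this.trans (le_of_eq ?_)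
      unfold dispConst
      ring
  · refine setIntegral_le_of_forall_interval (B := R * M) hR ?_ (fun p hp => ?_)
      fun a ha haR => ?_
    · simp_rw [← mul_assoc]
      exact hw.integrableOn_mul (by fun_prop) R
    · rw [norm_mul, hen, one_mul, norm_mul, Complex.norm_real, Real.norm_eq_abs,
        abs_of_pos hp.1]
      gcongr
      · exact hp.2
      · exact hM p
    · have := norm_oscillatory_integral_le (x := x) (t := t) (p₀ := p₀)
        (κ := 8 / min 1 t₁ * (1 + q))
        (m := 1 + q) (r := fun p => (p : ℂ)) (r' := fun _ => 1) haR (by linarith) hM0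
        (by positivity) (hwd a ha) (fun p => by simpa using (hasDerivAt_id p).ofReal_comp)
        continuous_const (fun p _ => hM p)
        (h1i a ha haR) (h2i a ha haR) (h2N a ha haR)
        (fun p hp => by
          rw [Complex.norm_real, Real.norm_eq_abs, abs_of_nonneg (ha.le.trans hp.1)]
          exact (hD a ha p hp).2.1)
        (fun p hp => by rw [norm_one, mul_one]; exact (hD a ha p hp).2.2)
        (fun p hp => (hpt a ha p hp).2.1)
      refine this.trans (le_of_eq ?_)
      unfold dispConst
      nth_rewrite 1 [← hsq2]
      field_simp

/-- The space derivative of `physPartial`. -/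
def physPartialDeriv (w : ℝ → ℂ) (t x R : ℝ) : ℝ :=
  (1 / Real.pi) * (∫ p in Ioc (0 : ℝ) R,
    Complex.exp (Complex.I * ((p * x + p ^ 3 * t : ℝ) : ℂ)) * (Complex.I * p) * w p).re

lemma MemE.hasDerivAt_physPartial {w : ℝ → ℂ} (hw : MemE w) (t x R : ℝ) :
    HasDerivAt (fun x => physPartial w t x R) (physPartialDeriv w t x R) x := by
  obtain ⟨M, hM⟩ := hw.bdd
  have hM : ∀ p, ‖w p‖ ≤ M := fun p => hM ⟨p, rfl⟩
  have key := hasDerivAt_integral_of_dominated_loc_of_deriv_le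
    (μ := volume.restrict (Ioc (0 : ℝ) R)) (x₀ := x) (s := univ)
    (F := fun x p => Complex.exp (Complex.I * ((p * x + p ^ 3 * t : ℝ) : ℂ)) * w p)
    (F' := fun x p => Complex.exp (Complex.I * ((p * x + p ^ 3 * t : ℝ) : ℂ))
      * (Complex.I * p) * w p) (bound := fun _ => R * M) univ_mem
    (Eventually.of_forall fun y => (hw.integrableOn_mul (by fun_prop) R).aestronglyMeasurable)
    (hw.integrableOn_mul (by fun_prop) R)
    (hw.integrableOn_mul (by fun_prop) R).aestronglyMeasurable
    ?_ (integrable_const _) ?_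
  · have h2 := (Complex.reCLM.hasFDerivAt.comp_hasDerivAt x key.2).const_mul (1 / Real.pi)
    exact h2
  · filter_upwards [ae_restrict_mem measurableSet_Ioc] with p hp y _
    rw [norm_mul, norm_mul, mul_comm Complex.I (((p * y + p ^ 3 * t : ℝ) : ℂ)),
      Complex.norm_exp_ofReal_mul_I, norm_mul,
      Complex.norm_I, Complex.norm_real, Real.norm_eq_abs, abs_of_pos hp.1, one_mul, one_mul]
    gcongr
    · exact hp.1.le.trans hp.2
    · exact hp.2
    · exact hM p
  · refine Eventually.of_forall fun p y _ => ?_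
    have h1 : HasDerivAt (fun y : ℝ => p * y + p ^ 3 * t) p y := by
      simpa using ((hasDerivAt_id y).const_mul p).add_const (p ^ 3 * t)
    exact (h1.ofReal_comp.const_mul Complex.I).cexp.mul_const (w p)

lemma MemE.abs_physPartial_le {t₁ M N t : ℝ} (ht₁ : 0 < t₁) (ht : t₁ ≤ t) {w : ℝ → ℂ}
    (hw : MemE w) (hM : ∀ p, ‖w p‖ ≤ M) (hN : dL2 w ^ 2 ≤ N) (x R : ℝ) :
    |physPartial w t x R| ≤ dispConst t₁ M N / √(1 + √(|x| / (3 * t))) ∧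
    |physPartialDeriv w t x R| ≤ dispConst t₁ M N * √(1 + √(|x| / (3 * t))) := by
  obtain ⟨h1, h2⟩ := hw.dispersive ht₁ ht hM hN x R
  have hpi : |1 / Real.pi| ≤ 1 := by
    rw [abs_of_pos (by positivity), div_le_one Real.pi_pos]
    linarith [Real.pi_gt_three]
  constructor
  · unfold physPartial
    rw [abs_mul]
    exact (mul_le_of_le_one_left (abs_nonneg _) hpi).trans ((Complex.abs_re_le_norm _).trans h1)
  · unfold physPartialDeriv
    rw [abs_mul]
    refine (mul_le_of_le_one_left (abs_nonneg _) hpi).trans ((Complex.abs_re_le_norm _).trans ?_)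
    refine le_trans (le_of_eq ?_) h2
    have : ∀ p : ℝ, Complex.exp (Complex.I * ((p * x + p ^ 3 * t : ℝ) : ℂ)) * (Complex.I * p) * w p
        = Complex.I *
          (Complex.exp (Complex.I * ((p * x + p ^ 3 * t : ℝ) : ℂ)) * (p * w p)) := fun p => by ring
    simp_rw [this]
    rw [integral_const_mul, norm_mul, Complex.norm_I, one_mul]

lemma dispConst_nonneg {t₁ M N : ℝ} (ht₁ : 0 < t₁) (hM : 0 ≤ M) (hN : 0 ≤ N) :
    0 ≤ dispConst t₁ M N := by
  have : 0 < min 1 t₁ := lt_min one_pos ht₁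
  unfold dispConst; positivity

lemma abs_phys_le {t₁ M N t : ℝ} (ht₁ : 0 < t₁) (ht : t₁ ≤ t) {w : ℝ → ℂ} (hw : MemE w)
    (hM : ∀ p, ‖w p‖ ≤ M) (hN : dL2 w ^ 2 ≤ N) {u : ℝ → ℝ} (hu : IsPhys w t u) (x : ℝ) :
    |u x| ≤ dispConst t₁ M N := by
  refine le_of_tendsto (hu x).abs (Eventually.of_forall fun R => ?_)
  refine (hw.abs_physPartial_le ht₁ ht hM hN x R).1.trans ?_
  refine div_le_self (dispConst_nonneg ht₁ ((norm_nonneg _).trans (hM 0))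
    ((sq_nonneg _).trans hN)) ?_
  rw [Real.one_le_sqrt]
  linarith [Real.sqrt_nonneg (|x| / (3 * t))]

/-- The decay of one factor compensates the growth of the derivative of the other one. -/
lemma phys_mul_lipschitz {t₁ M N t : ℝ} (ht₁ : 0 < t₁) (ht : t₁ ≤ t) {w w₂ : ℝ → ℂ}
    (hw : MemE w) (hw₂ : MemE w₂) (hM : ∀ p, ‖w p‖ ≤ M) (hN : dL2 w ^ 2 ≤ N)
    (hM₂ : ∀ p, ‖w₂ p‖ ≤ M) (hN₂ : dL2 w₂ ^ 2 ≤ N) {u v : ℝ → ℝ}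
    (hu : IsPhys w t u) (hv : IsPhys w₂ t v) (x y : ℝ) :
    |u x * v x - u y * v y| ≤ 2 * dispConst t₁ M N ^ 2 * |x - y| := by
  refine le_of_tendsto (((hu x).mul (hv x)).sub ((hu y).mul (hv y))).abs
    (Eventually.of_forall fun R => ?_)
  have hC := dispConst_nonneg (t₁ := t₁) (M := M) (N := N) ht₁ ((norm_nonneg _).trans (hM 0))
    ((sq_nonneg _).trans hN)
  refine Convex.norm_image_sub_le_of_norm_hasDerivWithin_le (s := univ)
    (f := fun x => physPartial w t x R * physPartial w₂ t x R)
    (fun z _ => ((hw.hasDerivAt_physPartial t z R).mul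
      (hw₂.hasDerivAt_physPartial t z R)).hasDerivWithinAt) (fun z _ => ?_) convex_univ
    (mem_univ _) (mem_univ _)
  have hs : 0 < √(1 + √(|z| / (3 * t))) := Real.sqrt_pos.2 (by positivity)
  have a1 := hw.abs_physPartial_le ht₁ ht hM hN z R
  have a2 := hw₂.abs_physPartial_le ht₁ ht hM₂ hN₂ z R
  rw [Real.norm_eq_abs]
  refine (abs_add_le _ _).trans ?_
  rw [abs_mul, abs_mul]
  refine (add_le_add (mul_le_mul a1.2 a2.1 (abs_nonneg _) (by positivity))
    (mul_le_mul a1.1 a2.2 (abs_nonneg _) (by positivity))).trans (le_of_eq ?_)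
  field_simp
  ring

lemma phys_continuous {t₁ M N t : ℝ} (ht₁ : 0 < t₁) (ht : t₁ ≤ t) {w : ℝ → ℂ} (hw : MemE w)
    (hM : ∀ p, ‖w p‖ ≤ M) (hN : dL2 w ^ 2 ≤ N) {u : ℝ → ℝ} (hu : IsPhys w t u) :
    Continuous u := by
  have ht0 : 0 < t := ht₁.trans_le ht
  have hC := dispConst_nonneg (t₁ := t₁) (M := M) (N := N) ht₁ ((norm_nonneg _).trans (hM 0))
    ((sq_nonneg _).trans hN)
  rw [continuous_iff_continuousAt]
  intro x
  set L := dispConst t₁ M N * √(1 + √((|x| + 1) / (3 * t))) with hL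
  have key : ∀ y ∈ Metric.ball x 1, |u y - u x| ≤ L * |y - x| := by
    intro y hy
    refine le_of_tendsto ((hu y).sub (hu x)).abs (Eventually.of_forall fun R => ?_)
    refine Convex.norm_image_sub_le_of_norm_hasDerivWithin_le (s := Metric.ball x 1)
      (f := fun x => physPartial w t x R)
      (fun z _ => (hw.hasDerivAt_physPartial t z R).hasDerivWithinAt) (fun z hz => ?_)
      (convex_ball x 1) (Metric.mem_ball_self one_pos) hy
    refine (hw.abs_physPartial_le ht₁ ht hM hN z R).2.trans ?_
    rw [hL]
    gcongr
    rw [Metric.mem_ball, Real.dist_eq] at hz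
    linarith [abs_sub_abs_le_abs_sub z x]
  rw [ContinuousAt, tendsto_iff_norm_sub_tendsto_zero]
  refine squeeze_zero' (Eventually.of_forall fun _ => norm_nonneg _)
    (eventually_of_mem (Metric.ball_mem_nhds x one_pos) key) ?_
  have : Continuous fun y : ℝ => L * |y - x| := by fun_prop
  simpa using this.tendsto x

lemma exists_Icc_of_isCompact_subset_Ioo {a b : ℝ} (hab : a < b) {K : Set ℝ} (hK : IsCompact K)
    (hKs : K ⊆ Ioo a b) : ∃ c d, a < c ∧ d < b ∧ K ⊆ Icc c d := by
  rcases K.eq_empty_or_nonempty with rfl | hne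
  · exact ⟨(a + b) / 2, (a + b) / 2, by linarith, by linarith, empty_subset _⟩
  · exact ⟨sInf K, sSup K, (hKs (hK.sInf_mem hne)).1, (hKs (hK.sSup_mem hne)).2, fun x hx =>
      ⟨csInf_le hK.bddBelow hx, le_csSup hK.bddAbove hx⟩⟩

/-- A test function of vanishing mean is the derivative of a test function. -/
lemma exists_primitive_test {a b : ℝ} (hab : a < b) {ψ : ℝ → ℝ} (hψ : ContDiff ℝ (⊤ : ℕ∞) ψ)
    (hψc : HasCompactSupport ψ) (hψs : tsupport ψ ⊆ Ioo a b) (h0 : ∫ x, ψ x = 0) :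
    ∃ η : ℝ → ℝ, ContDiff ℝ (⊤ : ℕ∞) η ∧ HasCompactSupport η ∧ tsupport η ⊆ Ioo a b ∧
      deriv η = ψ := by
  obtain ⟨c, d, hc, hd, hcd⟩ := exists_Icc_of_isCompact_subset_Ioo hab hψc hψs
  have hz : ∀ x, x ∉ Icc c d → ψ x = 0 := fun x hx => by
    by_contra h
    exact hx (hcd (subset_tsupport _ h))
  have hder : deriv (fun t => ∫ x in a..t, ψ x) = ψ :=
    funext fun t => Continuous.deriv_integral ψ hψ.continuous a t
  have hzero : ∀ t, t ∉ Icc c d → ∫ x in a..t, ψ x = 0 := by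
    intro t ht
    rcases lt_or_ge t c with h | h
    · refine intervalIntegral.integral_zero_ae (Eventually.of_forall fun x hx => hz x ?_)
      rintro ⟨h1, -⟩
      rcases le_total a t with h' | h'
      · rw [uIoc_of_le h'] at hx; linarith [hx.2]
      · rw [uIoc_of_ge h'] at hx; linarith [hx.2]
    · have htd : d < t := by
        by_contra h'
        exact ht ⟨h, not_lt.1 h'⟩
      rw [intervalIntegral.integral_eq_integral_of_support_subset, h0]
      intro x hx
      by_contra h'
      refine hx (hz x fun hx' => h' ⟨hc.trans_le hx'.1, hx'.2.trans htd.le⟩)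
  have hts : tsupport (fun t => ∫ x in a..t, ψ x) ⊆ Icc c d :=
    closure_minimal (fun t ht => by
      by_contra h
      exact ht (hzero t h)) isClosed_Icc
  refine ⟨fun t => ∫ x in a..t, ψ x, ?_, HasCompactSupport.intro isCompact_Icc hzero,
    hts.trans fun x hx => ⟨hc.trans_le hx.1, hx.2.trans_lt hd⟩, hder⟩
  rw [contDiff_infty_iff_deriv, hder]
  exact ⟨fun t => (hψ.continuous.integral_hasStrictDerivAt a t).hasDerivAt.differentiableAt, hψ⟩

/-- The du Bois-Reymond lemma. -/
lemma eq_const_of_integral_deriv_mul_eq_zero {a b : ℝ} (hab : a < b) {c : ℝ → ℝ}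
    (hc : Continuous c)
    (h : ∀ η : ℝ → ℝ, ContDiff ℝ (⊤ : ℕ∞) η → HasCompactSupport η → tsupport η ⊆ Ioo a b →
      ∫ x, deriv η x * c x = 0) : ∃ k, ∀ x ∈ Icc a b, c x = k := by
  obtain ⟨f, hfs, hfc, hfd, hfr, hf1⟩ := exists_contDiff_tsupport_subset (n := ⊤)
    (s := Ioo a b) (x := (a + b) / 2) (Ioo_mem_nhds (by linarith) (by linarith))
  have hfi : Integrable f := hfd.continuous.integrable_of_hasCompactSupport hfc
  have hI : 0 < ∫ x, f x := by
    refine (hfd.continuous).integral_pos_of_hasCompactSupport_nonneg_nonzero hfc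
      (fun x => (hfr ⟨x, rfl⟩).1) (x := (a + b) / 2) (by rw [hf1]; norm_num)
  set J := ∫ x, f x with hJ
  set k := (∫ x, f x * c x) / J with hk
  have key : ∀ᵐ x, x ∈ Ioo a b → c x - k = 0 := by
    refine isOpen_Ioo.ae_eq_zero_of_integral_contDiff_smul_eq_zero
      (Continuous.locallyIntegrable (by fun_prop) |>.locallyIntegrableOn _) ?_
    intro g hg hgc hgs
    have hgi : Integrable g := hg.continuous.integrable_of_hasCompactSupport hgc
    have hgci : Integrable fun x => g x * c x :=
      (hg.continuous.mul hc).integrable_of_hasCompactSupport hgc.mul_right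
    have hfci : Integrable fun x => f x * c x :=
      (hfd.continuous.mul hc).integrable_of_hasCompactSupport hfc.mul_right
    set G := ∫ x, g x with hG
    obtain ⟨η, h1, h2, h3, h4⟩ := exists_primitive_test hab (ψ := fun x => g x - G / J * f x)
      (hg.sub (contDiff_const.mul hfd)) (hgc.sub hfc.mul_left)
      (by
        refine (tsupport_sub _ _).trans (union_subset hgs ?_)
        exact (closure_mono (Function.support_mul_subset_right _ _)).trans hfs)
      (by
        rw [integral_sub hgi (hfi.const_mul _), integral_const_mul, ← hJ, ← hG]
        field_simp
        ring)
    have h5 := h η h1 h2 h3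
    rw [h4] at h5
    have e1 : ∀ x, (g x - G / J * f x) * c x = g x * c x - G / J * (f x * c x) := fun x => by ring
    simp_rw [e1] at h5
    rw [integral_sub hgci (hfci.const_mul _), integral_const_mul] at h5
    have e2 : ∀ x, g x • (c x - k) = g x * c x - k * g x := fun x => by
      rw [smul_eq_mul]; ring
    simp_rw [e2]
    rw [integral_sub hgci (hgi.const_mul _), integral_const_mul, ← hG, hk]
    rw [← h5]
    ring
  have h1 : EqOn c (fun _ => k) (Ioo a b) := by
    refine Measure.eqOn_open_of_ae_eq (μ := volume) ?_ isOpen_Ioo hc.continuousOn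
      continuousOn_const
    rw [EventuallyEq, ae_restrict_iff' measurableSet_Ioo]
    filter_upwards [key] with x hx hx'
    linarith [hx hx']
  refine ⟨k, fun x hx => ?_⟩
  have h2 := h1.closure hc continuous_const
  rw [closure_Ioo hab.ne] at h2
  exact h2 hx

lemma sub_eq_integral_of_weak_deriv {a b : ℝ} (hab : a < b) {f F : ℝ → ℝ}
    (hf : ContinuousOn f (Icc a b)) (hF : ContinuousOn F (Icc a b))
    (h : ∀ η : ℝ → ℝ, ContDiff ℝ (⊤ : ℕ∞) η → HasCompactSupport η → tsupport η ⊆ Ioo a b →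
      ∫ x in Icc a b, (deriv η x * f x + η x * F x) = 0) {s t : ℝ} (hs : s ∈ Icc a b)
    (ht : t ∈ Icc a b) : f t - f s = ∫ x in s..t, F x := by
  set f₁ := IccExtend hab.le ((Icc a b).domRestrict f) with hf₁
  set F₁ := IccExtend hab.le ((Icc a b).domRestrict F) with hF₁
  have ef : ∀ x ∈ Icc a b, f₁ x = f x := fun x hx => by rw [hf₁, IccExtend_of_mem _ _ hx]; rfl
  have eF : ∀ x ∈ Icc a b, F₁ x = F x := fun x hx => by rw [hF₁, IccExtend_of_mem _ _ hx]; rfl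
  have cf : Continuous f₁ := hf.domRestrict.Icc_extend'
  have cF : Continuous F₁ := hF.domRestrict.Icc_extend'
  set P : ℝ → ℝ := fun t => ∫ x in a..t, F₁ x with hP
  have dP : ∀ t, HasDerivAt P (F₁ t) t := fun t =>
    (cF.integral_hasStrictDerivAt a t).hasDerivAt
  have cP : Continuous P := continuous_iff_continuousAt.2 fun t => (dP t).continuousAt
  obtain ⟨k, hk⟩ := eq_const_of_integral_deriv_mul_eq_zero hab (c := fun x => f₁ x - P x)
    (cf.sub cP) fun η h1 h2 h3 => by
      have hηz : ∀ x, x ∉ Ioo a b → η x = 0 := fun x hx => by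
        by_contra h'
        exact hx (h3 (subset_tsupport _ h'))
      have hdz : ∀ x, x ∉ Ioo a b → deriv η x = 0 := fun x hx => by
        by_contra h'
        exact hx (h3 (support_deriv_subset h'))
      have hdc : Continuous (deriv η) := h1.continuous_deriv (by simp)
      have hdη : ∀ x, HasDerivAt η (deriv η x) x := fun x =>
        (h1.differentiable (by simp) x).hasDerivAt
      have ibp := intervalIntegral.integral_deriv_mul_eq_sub (a := a) (b := b)
        (fun x _ => hdη x) (fun x _ => dP x) (hdc.intervalIntegrable _ _)
        (cF.intervalIntegrable _ _)
      rw [hηz b (by simp), hηz a (by simp), zero_mul, zero_mul, sub_zero] at ibp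
      have h4 := h η h1 h2 h3
      have h5 : ∫ x in a..b, (deriv η x * f₁ x + η x * F₁ x) = 0 := by
        rw [intervalIntegral.integral_of_le hab.le, ← integral_Icc_eq_integral_Ioc, ← h4]
        exact setIntegral_congr_fun measurableSet_Icc fun x hx => by
          simp only [ef x hx, eF x hx]
      have hη := h1.continuous
      have i1 : IntervalIntegrable (fun x => deriv η x * f₁ x) volume a b :=
        (hdc.mul cf).intervalIntegrable _ _
      have i2 : IntervalIntegrable (fun x => deriv η x * P x) volume a b :=
        (hdc.mul cP).intervalIntegrable _ _
      have i3 : IntervalIntegrable (fun x => η x * F₁ x) volume a b :=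
        (hη.mul cF).intervalIntegrable _ _
      rw [intervalIntegral.integral_add i1 i3] at h5
      rw [intervalIntegral.integral_add i2 i3] at ibp
      rw [← intervalIntegral.integral_eq_integral_of_support_subset (a := a) (b := b)]
      · simp_rw [mul_sub]
        rw [intervalIntegral.integral_sub i1 i2]
        linarith
      · intro x hx
        by_contra h'
        refine hx ?_
        simp only
        rw [hdz x fun h'' => h' (Ioo_subset_Ioc_self h''), zero_mul]
  have e1 := hk s hs
  have e2 := hk t ht
  have e3 : ∫ x in s..t, F x = ∫ x in s..t, F₁ x := by
    refine intervalIntegral.integral_congr fun x hx => (eF x ?_).symm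
    exact (convex_Icc a b).ordConnected.uIcc_subset hs ht hx
  have e4 : P s + ∫ x in s..t, F₁ x = P t :=
    intervalIntegral.integral_add_adjacent_intervals (cF.intervalIntegrable _ _)
      (cF.intervalIntegrable _ _)
  rw [e3, ← ef s hs, ← ef t ht]
  linarith

lemma FiniteEnorm.exists_bounds {t₁ t₂ : ℝ} (ht₁ : 0 < t₁) {S : ESol (Icc t₁ t₂)}
    (h : FiniteEnorm (Icc t₁ t₂) S) :
    ∃ M N : ℝ, ∀ t ∈ Icc t₁ t₂, (∀ p, ‖S.w t p‖ ≤ M) ∧ dL2 (S.w t) ^ 2 ≤ N := by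
  obtain ⟨K, hK⟩ := h
  refine ⟨K, (K / t₂ ^ (-(1 / 6 : ℝ))) ^ 2, fun t ht => ?_⟩
  have hKt : supN (S.w t) + t ^ (-(1 / 6 : ℝ)) * dL2 (S.w t) ≤ K := hK ⟨t, ht, rfl⟩
  have hb := (S.memE t ht).bdd
  have hs : ∀ p, ‖S.w t p‖ ≤ supN (S.w t) := fun p => le_ciSup hb p
  have hs0 : 0 ≤ supN (S.w t) := (norm_nonneg _).trans (hs 0)
  have hd0 : 0 ≤ dL2 (S.w t) := ENNReal.toReal_nonneg
  have ht0 : 0 < t := ht₁.trans_le ht.1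
  have htp : 0 < t ^ (-(1 / 6 : ℝ)) := Real.rpow_pos_of_pos ht0 _
  have ht2p : 0 < t₂ ^ (-(1 / 6 : ℝ)) := Real.rpow_pos_of_pos (ht0.trans_le ht.2) _
  have hle : t₂ ^ (-(1 / 6 : ℝ)) ≤ t ^ (-(1 / 6 : ℝ)) :=
    Real.rpow_le_rpow_of_nonpos ht0 ht.2 (by norm_num)
  constructor
  · intro p
    have : 0 ≤ t ^ (-(1 / 6 : ℝ)) * dL2 (S.w t) := by positivity
    linarith [hs p]
  · refine pow_le_pow_left₀ hd0 ?_ 2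
    rw [le_div_iff₀ ht2p]
    calc _ ≤ dL2 (S.w t) * t ^ (-(1 / 6 : ℝ)) := by gcongr
      _ ≤ K := by linarith

lemma ESol.aestronglyMeasurable {t₁ t₂ : ℝ} {S : ESol (Icc t₁ t₂)} {M : ℝ}
    (hM : ∀ t ∈ Icc t₁ t₂, ∀ p, ‖S.w t p‖ ≤ M) :
    AEStronglyMeasurable (fun q : ℝ × ℝ => S.u q.1 q.2)
      ((volume.restrict (Icc t₁ t₂)).prod volume) := by
  have hms : MeasurableSet (Icc t₁ t₂ ×ˢ (univ : Set ℝ)) := measurableSet_Icc.prod .univ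
  have hμ : (volume.restrict (Icc t₁ t₂)).prod (volume : Measure ℝ)
      = (volume : Measure (ℝ × ℝ)).restrict (Icc t₁ t₂ ×ˢ (univ : Set ℝ)) := by
    rw [Measure.volume_eq_prod, ← Measure.prod_restrict, Measure.restrict_univ]
  rw [hμ]
  refine aestronglyMeasurable_of_tendsto_ae atTop
    (f := fun (n : ℕ) (q : ℝ × ℝ) => physPartial (S.w q.1) q.1 q.2 n) (fun n => ?_) ?_
  · refine ContinuousOn.aestronglyMeasurable ?_ hms
    refine ContinuousOn.mul continuousOn_const (Complex.continuous_re.comp_continuousOn ?_)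
    refine continuousOn_of_dominated (bound := fun _ => M) (fun q hq => ?_) (fun q hq => ?_)
      (integrable_const _) ?_
    · exact ((S.memE q.1 hq.1).integrableOn_mul (by fun_prop) n).aestronglyMeasurable
    · refine Eventually.of_forall fun p => ?_
      rw [norm_mul, mul_comm Complex.I, Complex.norm_exp_ofReal_mul_I, one_mul]
      exact hM q.1 hq.1 p
    · filter_upwards [ae_restrict_mem measurableSet_Ioc] with p hp
      refine ContinuousOn.mul (Continuous.continuousOn (by fun_prop)) ?_
      exact S.contt.comp (f := fun q : ℝ × ℝ => (q.1, p)) (by fun_prop)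
        fun q hq => ⟨hq.1, hp.1⟩
  · filter_upwards [ae_restrict_mem hms] with q hq
    exact (S.isPhys q.1 hq.1 q.2).comp tendsto_natCast_atTop_atTop

/-- The weak formulation tested against `η(t) h(x)`. -/
lemma IsSolOn.weak_time {t₁ t₂ ε C M : ℝ} {S : ESol (Icc t₁ t₂)} (hS : IsSolOn ε S.u (Icc t₁ t₂))
    (hM : ∀ t ∈ Icc t₁ t₂, ∀ p, ‖S.w t p‖ ≤ M)
    (hC : ∀ t ∈ Icc t₁ t₂, ∀ x, |S.u t x| ≤ C) {h : ℝ → ℝ}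
    (hh : ContDiff ℝ (⊤ : ℕ∞) h) (hhc : HasCompactSupport h) {η : ℝ → ℝ}
    (hη : ContDiff ℝ (⊤ : ℕ∞) η) (hηc : HasCompactSupport η) (hηs : tsupport η ⊆ Ioo t₁ t₂) :
    ∫ t in Icc t₁ t₂, (deriv η t * (∫ x, S.u t x * h x)
      + η t * ((∫ x, S.u t x * deriv (deriv (deriv h)) x)
        + ε * ∫ x, S.u t x ^ 3 * deriv h x)) = 0 := by
  have hdh : ContDiff ℝ (⊤ : ℕ∞) (deriv h) := (contDiff_infty_iff_deriv.1 hh).2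
  have hddh : ContDiff ℝ (⊤ : ℕ∞) (deriv (deriv h)) := (contDiff_infty_iff_deriv.1 hdh).2
  have hdddh : ContDiff ℝ (⊤ : ℕ∞) (deriv (deriv (deriv h))) :=
    (contDiff_infty_iff_deriv.1 hddh).2
  have hdη : ContDiff ℝ (⊤ : ℕ∞) (deriv η) := (contDiff_infty_iff_deriv.1 hη).2
  have hz : ∀ x, x ∉ Ioo t₁ t₂ → η x = 0 := fun x hx => by
    by_contra h'
    exact hx (hηs (subset_tsupport _ h'))
  have hdz : ∀ x, x ∉ Ioo t₁ t₂ → deriv η x = 0 := fun x hx => by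
    by_contra h'
    exact hx (hηs (support_deriv_subset h'))
  have hsupp : tsupport (fun q : ℝ × ℝ => η q.1 * h q.2) ⊆ tsupport η ×ˢ tsupport h := by
    refine closure_minimal (fun q hq => ?_) ((isClosed_tsupport _).prod (isClosed_tsupport _))
    have hq' : η q.1 * h q.2 ≠ 0 := hq
    exact ⟨subset_tsupport _ (left_ne_zero_of_mul hq'), subset_tsupport _ (right_ne_zero_of_mul hq')⟩
  have key := hS (fun t x => η t * h x) (by
      exact (hη.comp contDiff_fst).mul (hh.comp contDiff_snd))
    (IsCompact.of_isClosed_subset (hηc.isCompact.prod hhc.isCompact) (isClosed_tsupport _) hsupp)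
    (by
      rw [interior_Icc]
      exact hsupp.trans (prod_mono hηs (subset_univ _)))
  have e1 : ∀ t x, dt1 (fun t x => η t * h x) t x = deriv η t * h x := fun t x => by
    simp only [dt1]
    rw [deriv_mul_const (hη.differentiable (by simp) t)]
  have e2 : ∀ k : ℝ → ℝ, ContDiff ℝ (⊤ : ℕ∞) k →
      dx1 (fun t x => η t * k x) = fun t x => η t * deriv k x := fun k hk => by
    funext t x
    simp only [dx1]
    rw [deriv_const_mul _ (hk.differentiable (by simp) x)]
  rw [e2 h hh, e2 _ hdh, e2 _ hddh] at key
  simp only [e1] at key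
  have hUm := S.aestronglyMeasurable hM
  have hUb : ∀ᵐ q ∂((volume.restrict (Icc t₁ t₂)).prod (volume : Measure ℝ)),
      ‖S.u q.1 q.2‖ ≤ C := by
    have hμ : (volume.restrict (Icc t₁ t₂)).prod (volume : Measure ℝ)
        = (volume : Measure (ℝ × ℝ)).restrict (Icc t₁ t₂ ×ˢ (univ : Set ℝ)) := by
      rw [Measure.volume_eq_prod, ← Measure.prod_restrict, Measure.restrict_univ]
    rw [hμ]
    filter_upwards [ae_restrict_mem (measurableSet_Icc.prod .univ)] with q hq
    exact hC q.1 hq.1 q.2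
  have int1 : ∀ {α k : ℝ → ℝ}, Continuous α → HasCompactSupport α → Continuous k →
      HasCompactSupport k → Integrable (fun q : ℝ × ℝ => α q.1 * k q.2)
      ((volume.restrict (Icc t₁ t₂)).prod volume) := fun h1 h2 h3 h4 =>
    (h1.integrable_of_hasCompactSupport h2).restrict.mul_prod
      (h3.integrable_of_hasCompactSupport h4)
  have I1 : Integrable (fun q : ℝ × ℝ => S.u q.1 q.2 * (deriv η q.1 * h q.2))
      ((volume.restrict (Icc t₁ t₂)).prod volume) :=
    (int1 hdη.continuous hηc.deriv hh.continuous hhc).bdd_mul hUm hUb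
  have I2 : Integrable (fun q : ℝ × ℝ => S.u q.1 q.2 * (η q.1 * deriv (deriv (deriv h)) q.2))
      ((volume.restrict (Icc t₁ t₂)).prod volume) :=
    (int1 hη.continuous hηc hdddh.continuous hhc.deriv.deriv.deriv).bdd_mul hUm hUb
  have I3 : Integrable (fun q : ℝ × ℝ => S.u q.1 q.2 ^ 3 * (η q.1 * deriv h q.2))
      ((volume.restrict (Icc t₁ t₂)).prod volume) := by
    refine (int1 hη.continuous hηc hdh.continuous hhc.deriv).bdd_mul (c := C ^ 3) (hUm.pow 3) ?_
    filter_upwards [hUb] with q hq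
    rw [norm_pow]
    gcongr
  rw [← setIntegral_eq_integral_of_forall_compl_eq_zero (s := Icc t₁ t₂ ×ˢ (univ : Set ℝ)),
    Measure.volume_eq_prod, ← Measure.prod_restrict, Measure.restrict_univ] at key
  · have e3 : (fun q : ℝ × ℝ => S.u q.1 q.2 *
        (deriv η q.1 * h q.2 + η q.1 * deriv (deriv (deriv h)) q.2) +
        ε * S.u q.1 q.2 ^ 3 * (η q.1 * deriv h q.2)) =
        ((fun q : ℝ × ℝ => S.u q.1 q.2 * (deriv η q.1 * h q.2)) +
        ((fun q : ℝ × ℝ => S.u q.1 q.2 * (η q.1 * deriv (deriv (deriv h)) q.2)) +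
        fun q : ℝ × ℝ => ε * (S.u q.1 q.2 ^ 3 * (η q.1 * deriv h q.2)))) := by
      funext q; simp only [Pi.add_apply]; ring
    rw [e3, integral_add' I1 (I2.add (I3.const_mul ε)), integral_add' I2 (I3.const_mul ε),
      integral_const_mul, integral_prod _ I1, integral_prod _ I2, integral_prod _ I3] at key
    have J1 := I1.integral_prod_left
    have J2 := I2.integral_prod_left
    have J3 := I3.integral_prod_left
    have J23 : Integrable (fun t => (∫ y, S.u (t, y).1 (t, y).2 *
        (η (t, y).1 * deriv (deriv (deriv h)) (t, y).2)) +
        ε * ∫ y, S.u (t, y).1 (t, y).2 ^ 3 * (η (t, y).1 * deriv h (t, y).2))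
        (volume.restrict (Icc t₁ t₂)) := J2.add (J3.const_mul ε)
    rw [← integral_const_mul, ← integral_add J2 (J3.const_mul ε),
      ← integral_add J1 J23] at key
    rw [← key]
    refine integral_congr_ae (Eventually.of_forall fun t => ?_)
    have f1 : ∀ (a : ℝ) (k l : ℝ → ℝ), ∫ x, l x * (a * k x) = a * ∫ x, l x * k x :=
      fun a k l => by
        rw [← integral_const_mul]
        exact integral_congr_ae (Eventually.of_forall fun x => by simp only; ring)
    simp only [f1]
    ring
  · rintro ⟨t, x⟩ hq
    have ht : t ∉ Ioo t₁ t₂ := fun h' => hq ⟨Ioo_subset_Icc_self h', mem_univ _⟩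
    simp [hz t ht, hdz t ht]

/-- The real Hilbert space `L²(ℝ)`. -/
abbrev L2R : Type := Lp ℝ 2 (volume : Measure ℝ)

/-- Translation on `L²(ℝ)`: `(transl s f)(x) = f (s + x)`. -/
def transl (s : ℝ) : L2R →ₗᵢ[ℝ] L2R :=
  Lp.compMeasurePreservingₗᵢ ℝ (fun x => s + x) (measurePreserving_add_left volume s)

lemma transl_ae (s : ℝ) (f : L2R) : transl s f =ᵐ[volume] fun x => f (s + x) :=
  Lp.coeFn_compMeasurePreserving f (measurePreserving_add_left volume s)

lemma continuous_transl (f : L2R) : Continuous fun s => transl s f := by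
  let g : C(ℝ, C(ℝ, ℝ)) := (ContinuousMap.mk (fun a : ℝ × ℝ => a.1 + a.2) continuous_add).curry
  exact (continuous_const (y := f)).compMeasurePreservingLp g.continuous
    (fun s => measurePreserving_add_left volume s) (by simp)

lemma inner_eq_integral (f g : L2R) : inner ℝ f g = ∫ x, f x * g x := by
  rw [L2.inner_def]
  exact integral_congr_ae (Eventually.of_forall fun x => by simp [mul_comm])

lemma inner_transl (s : ℝ) (f g : L2R) : inner ℝ (transl s f) g = ∫ x, f (s + x) * g x := by
  rw [inner_eq_integral]
  refine integral_congr_ae ?_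
  filter_upwards [transl_ae s f] with x hx
  rw [hx]

lemma inner_transl_neg (s : ℝ) (f g : L2R) :
    inner ℝ (transl (-s) f) g = ∫ x, f x * g (s + x) := by
  rw [inner_transl, ← integral_add_left_eq_self _ s]
  simp

lemma inner_transl_neg_eq (s : ℝ) (f g : L2R) :
    inner ℝ (transl (-s) f) g = inner ℝ f (transl s g) := by
  rw [inner_transl_neg, real_inner_comm, inner_transl]
  simp_rw [mul_comm]

lemma transl_zero (f : L2R) : transl 0 f = f := by
  refine Lp.ext ?_
  filter_upwards [transl_ae 0 f] with x hx
  rw [hx, zero_add]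

lemma integrable_smul_transl {κ : ℝ → ℝ} (hκ : Integrable κ) (f : L2R) :
    Integrable fun s => κ s • transl s f := by
  refine Integrable.mono' (hκ.norm.mul_const ‖f‖)
    (hκ.aestronglyMeasurable.smul (continuous_transl f).aestronglyMeasurable)
    (Eventually.of_forall fun s => ?_)
  rw [norm_smul, LinearIsometry.norm_map]

/-- Mollification on `L²(ℝ)`: `mollify κ f = ∫ κ(s) f(s + ·) ds`. -/
def mollify {κ : ℝ → ℝ} (hκ : Integrable κ) : L2R →L[ℝ] L2R :=
  LinearMap.mkContinuous
    { toFun := fun f => ∫ s, κ s • transl s f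
      map_add' := fun f g => by
        rw [← integral_add (integrable_smul_transl hκ f) (integrable_smul_transl hκ g)]
        simp only [map_add, smul_add]
      map_smul' := fun c f => by
        rw [RingHom.id_apply, ← integral_smul]
        simp only [map_smul, smul_comm c] }
    (∫ s, ‖κ s‖) fun f => by
      rw [← integral_mul_const]
      refine (norm_integral_le_integral_norm _).trans (le_of_eq ?_)
      simp [norm_smul]

lemma inner_mollify {κ : ℝ → ℝ} (hκ : Integrable κ) (f g : L2R) :
    inner ℝ (mollify hκ f) g = ∫ s, κ s * inner ℝ (transl s f) g := by
  rw [real_inner_comm]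
  refine (integral_inner (integrable_smul_transl hκ f) g).symm.trans ?_
  simp only [inner_smul_right, real_inner_comm g]

lemma inner_mollify_symm {κ : ℝ → ℝ} (hκ : Integrable κ) (he : ∀ s, κ (-s) = κ s) (f g : L2R) :
    inner ℝ (mollify hκ f) g = inner ℝ f (mollify hκ g) := by
  rw [inner_mollify, real_inner_comm, inner_mollify, ← integral_neg_eq_self]
  refine integral_congr_ae (Eventually.of_forall fun s => ?_)
  simp only [he, inner_transl_neg_eq]
  rw [real_inner_comm]

lemma inner_mollify_self_odd {κ : ℝ → ℝ} (hκ : Integrable κ) (ho : ∀ s, κ (-s) = -κ s)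
    (f : L2R) : inner ℝ (mollify hκ f) f = 0 := by
  have h : inner ℝ (mollify hκ f) f = - inner ℝ (mollify hκ f) f := by
    conv_lhs => rw [inner_mollify, ← integral_neg_eq_self]
    rw [inner_mollify, ← integral_neg]
    refine integral_congr_ae (Eventually.of_forall fun s => ?_)
    simp only [ho, inner_transl_neg_eq]
    rw [real_inner_comm, neg_mul]
  linarith

lemma abs_inner_mollify_le_of_odd {κ : ℝ → ℝ} (hκ : Integrable κ) (ho : ∀ s, κ (-s) = -κ s)
    (hκ' : Integrable fun s => |s| * |κ s|) {f g : L2R} {K : ℝ}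
    (h : ∀ s, |inner ℝ (transl s f) g - inner ℝ (transl (-s) f) g| ≤ K * |s|) :
    2 * |inner ℝ (mollify hκ f) g| ≤ K * ∫ s, |s| * |κ s| := by
  have hint : Integrable fun s : ℝ => κ s * inner ℝ (transl s f) g := by
    have := (integrable_smul_transl hκ f).const_inner (𝕜 := ℝ) g
    refine this.congr (Eventually.of_forall fun s => ?_)
    simp only [inner_smul_right, real_inner_comm g]
  have h1 : inner ℝ (mollify hκ f) g = ∫ s, -(κ s * inner ℝ (transl (-s) f) g) := by
    rw [inner_mollify, ← integral_neg_eq_self]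
    simp only [ho, neg_mul]
  have hint2 : Integrable fun s => -(κ s * inner ℝ (transl (-s) f) g) := by
    refine hint.comp_neg.congr (Eventually.of_forall fun s => ?_)
    simp only [ho, neg_mul]
  have h2 : 2 * inner ℝ (mollify hκ f) g
      = ∫ s, κ s * (inner ℝ (transl s f) g - inner ℝ (transl (-s) f) g) := by
    rw [two_mul]
    nth_rewrite 2 [h1]
    rw [inner_mollify, ← integral_add hint hint2]
    refine integral_congr_ae (Eventually.of_forall fun s => ?_)
    simp only
    ring
  rw [← abs_two (α := ℝ), ← abs_mul, h2, ← integral_const_mul, ← Real.norm_eq_abs]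
  refine norm_integral_le_of_norm_le (hκ'.const_mul K) (Eventually.of_forall fun s => ?_)
  rw [norm_mul, Real.norm_eq_abs, Real.norm_eq_abs]
  calc |κ s| * _ ≤ |κ s| * (K * |s|) := by gcongr; exact h s
    _ = _ := by ring

/-- Duality between mollification and convolution. -/
lemma inner_mollify_eq_convolution {κ : ℝ → ℝ} (hκ : Integrable κ) (f k : L2R) {k' : ℝ → ℝ}
    (hk : k =ᵐ[volume] k') :
    inner ℝ (mollify hκ f) k
      = ∫ x, f x * convolution κ k' (ContinuousLinearMap.mul ℝ ℝ) volume x := by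
  have hk' : MemLp k' 2 (volume : Measure ℝ) := (Lp.memLp k).ae_eq hk
  have e1 : ∀ s, κ s * inner ℝ (transl s f) k = ∫ x, κ s * (f x * k' (x - s)) := fun s => by
    rw [integral_const_mul, inner_transl]
    congr 1
    rw [← integral_add_left_eq_self (fun x => f x * k' (x - s)) s]
    refine integral_congr_ae ?_
    filter_upwards [hk] with x hx
    simp [hx]
  have hm : AEStronglyMeasurable (Function.uncurry fun s x => κ s * (f x * k' (x - s)))
      ((volume : Measure ℝ).prod volume) := by
    refine (hκ.aestronglyMeasurable.comp_fst).mul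
      ((Lp.aestronglyMeasurable f).comp_snd.mul ?_)
    refine hk'.aestronglyMeasurable.comp_quasiMeasurePreserving
      (f := fun q : ℝ × ℝ => q.2 - q.1) ?_
    exact (quasiMeasurePreserving_sub_of_right_invariant volume volume).comp
      Measure.measurePreserving_swap.quasiMeasurePreserving
  have hks : ∀ s, MemLp (fun x => k' (x - s)) 2 (volume : Measure ℝ) := fun s =>
    hk'.comp_measurePreserving (measurePreserving_sub_right volume s)
  have hfk : ∀ s, Integrable fun x => f x * k' (x - s) := fun s =>
    (Lp.memLp f).integrable_mul (hks s)
  rw [inner_mollify]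
  simp only [e1]
  rw [integral_integral_swap]
  · refine integral_congr_ae (Eventually.of_forall fun x => ?_)
    simp only [convolution_def, ContinuousLinearMap.mul_apply', ← integral_const_mul]
    refine integral_congr_ae (Eventually.of_forall fun s => ?_)
    simp only
    ring
  · rw [integrable_prod_iff hm]
    refine ⟨Eventually.of_forall fun s => (hfk s).const_mul (κ s), ?_⟩
    refine Integrable.mono' (hκ.norm.mul_const (∫ x, (f x ^ 2 + k' x ^ 2)))
      hm.norm.integral_prod_right' (Eventually.of_forall fun s => ?_)
    have i1 : Integrable fun x => k' (x - s) ^ 2 := (hks s).integrable_sq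
    have i2 : Integrable fun x => f x ^ 2 := (Lp.memLp f).integrable_sq
    rw [Real.norm_of_nonneg (integral_nonneg fun x => norm_nonneg _)]
    simp only [Function.uncurry_apply_pair, norm_mul]
    rw [integral_const_mul]
    refine mul_le_mul_of_nonneg_left ?_ (norm_nonneg _)
    calc ∫ x, ‖f x‖ * ‖k' (x - s)‖ ≤ ∫ x, (f x ^ 2 + k' (x - s) ^ 2) := by
          refine integral_mono_of_nonneg (Eventually.of_forall fun x => by positivity) (i2.add i1)
            (Eventually.of_forall fun x => ?_)
          simp only [Real.norm_eq_abs]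
          nlinarith [sq_nonneg (|f x| - |k' (x - s)|), sq_abs (f x), sq_abs (k' (x - s)),
            sq_nonneg (f x), sq_nonneg (k' (x - s))]
      _ = ∫ x, (f x ^ 2 + k' x ^ 2) := by
          rw [integral_add i2 i1, integral_add i2 hk'.integrable_sq,
            integral_sub_right_eq_self (fun x => k' x ^ 2) s]

lemma eq_zero_of_inner_test_eq_zero {D : L2R}
    (h : ∀ (k : L2R) (k' : ℝ → ℝ), k =ᵐ[volume] k' → HasCompactSupport k' → Continuous k' →
      inner ℝ D k = 0) : D = 0 := by
  have hd := Lp.dense_hasCompactSupport_contDiff (F := ℝ) (μ := (volume : Measure ℝ)) (p := 2)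
    (by simp)
  refine (inner_self_eq_zero (𝕜 := ℝ)).1 ?_
  have hcl : IsClosed {k : L2R | inner ℝ D k = 0} :=
    isClosed_eq (continuous_const.inner continuous_id) continuous_const
  refine closure_minimal ?_ hcl (hd D)
  rintro k ⟨k', h1, h2, h3⟩
  exact h k k' h1 h2 h3.continuous

lemma deriv_convolution_mul {g k : ℝ → ℝ} (hg : ContDiff ℝ (⊤ : ℕ∞) g)
    (hgc : HasCompactSupport g) (hk : Continuous k) :
    deriv (convolution g k (ContinuousLinearMap.mul ℝ ℝ) volume)
      = convolution (deriv g) k (ContinuousLinearMap.mul ℝ ℝ) volume :=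
  funext fun x => (hgc.hasDerivAt_convolution_left (ContinuousLinearMap.mul ℝ ℝ)
    (hg.of_le (by exact_mod_cast le_top)) hk.locallyIntegrable x).deriv

lemma mollify_sub_eq_integral {t₁ t₂ ε : ℝ} {Z B : ℝ → L2R}
    (hZ : ContinuousOn Z (Icc t₁ t₂)) (hB : ContinuousOn B (Icc t₁ t₂))
    (hweak : ∀ h : ℝ → ℝ, ContDiff ℝ (⊤ : ℕ∞) h → HasCompactSupport h →
      ∀ s ∈ Icc t₁ t₂, ∀ t ∈ Icc t₁ t₂, (∫ x, Z t x * h x) - ∫ x, Z s x * h x =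
        ∫ r in s..t, ((∫ x, Z r x * deriv (deriv (deriv h)) x) + ε * ∫ x, B r x * deriv h x))
    {g : ℝ → ℝ} (hg : ContDiff ℝ (⊤ : ℕ∞) g) (hgc : HasCompactSupport g)
    (hi : Integrable g) (hi1 : Integrable (deriv g)) (hi3 : Integrable (deriv (deriv (deriv g))))
    {s t : ℝ} (hs : s ∈ Icc t₁ t₂) (ht : t ∈ Icc t₁ t₂) :
    mollify hi (Z t) - mollify hi (Z s)
      = ∫ r in s..t, (mollify hi3 (Z r) + ε • mollify hi1 (B r)) := by
  have hdg : ContDiff ℝ (⊤ : ℕ∞) (deriv g) := (contDiff_infty_iff_deriv.1 hg).2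
  have hddg : ContDiff ℝ (⊤ : ℕ∞) (deriv (deriv g)) := (contDiff_infty_iff_deriv.1 hdg).2
  have hV : ContinuousOn (fun r => mollify hi3 (Z r) + ε • mollify hi1 (B r)) (Icc t₁ t₂) :=
    ((mollify hi3).continuous.comp_continuousOn hZ).add
      (((mollify hi1).continuous.comp_continuousOn hB).const_smul ε)
  have hVi : IntervalIntegrable (fun r => mollify hi3 (Z r) + ε • mollify hi1 (B r)) volume s t :=
    (hV.mono (uIcc_subset_Icc hs ht)).intervalIntegrable
  rw [← sub_eq_zero]
  refine eq_zero_of_inner_test_eq_zero fun k k' hk hkc hkcont => ?_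
  have hd1 := deriv_convolution_mul hg hgc hkcont
  have hd3 : deriv (deriv (deriv (convolution g k' (ContinuousLinearMap.mul ℝ ℝ) volume)))
      = convolution (deriv (deriv (deriv g))) k' (ContinuousLinearMap.mul ℝ ℝ) volume := by
    rw [hd1, deriv_convolution_mul hdg hgc.deriv hkcont,
      deriv_convolution_mul hddg hgc.deriv.deriv hkcont]
  have key := hweak (convolution g k' (ContinuousLinearMap.mul ℝ ℝ) volume)
    (hgc.contDiff_convolution_left _ hg hkcont.locallyIntegrable)
    (hgc.convolution _ hkc) s hs t ht
  rw [hd3, hd1] at key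
  simp only [← inner_mollify_eq_convolution hi _ k hk, ← inner_mollify_eq_convolution hi1 _ k hk,
    ← inner_mollify_eq_convolution hi3 _ k hk] at key
  rw [inner_sub_left, inner_sub_left, key, sub_eq_zero, real_inner_comm]
  have := (innerSL ℝ k).intervalIntegral_comp_comm hVi
  simp only [innerSL_apply_apply] at this
  rw [← this]
  refine intervalIntegral.integral_congr fun r _ => ?_
  simp only [inner_add_right, inner_smul_right]
  rw [real_inner_comm k, real_inner_comm k]

/-- The mollified energy identity. -/
lemma hasDerivAt_inner_of_sub_eq_integral {t₁ t₂ : ℝ} {Z V : ℝ → L2R} (T : L2R →L[ℝ] L2R)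
    (hT : ∀ f g : L2R, inner ℝ (T f) g = inner ℝ f (T g))
    (hZ : ContinuousOn Z (Icc t₁ t₂)) (hV : ContinuousOn V (Icc t₁ t₂))
    (h : ∀ s ∈ Icc t₁ t₂, ∀ t ∈ Icc t₁ t₂, T (Z t) - T (Z s) = ∫ r in s..t, V r)
    {x : ℝ} (hx : x ∈ Ioo t₁ t₂) :
    HasDerivAt (fun t => inner ℝ (T (Z t)) (Z t)) (2 * inner ℝ (V x) (Z x)) x := by
  have hn : Icc t₁ t₂ ∈ 𝓝 x := Icc_mem_nhds hx.1 hx.2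
  have hxI : x ∈ Icc t₁ t₂ := Ioo_subset_Icc_self hx
  have hW : HasDerivAt (fun t => ∫ r in x..t, V r) (V x) x := by
    refine intervalIntegral.integral_hasDerivAt_right (by simp) ?_ (hV.continuousAt hn)
    exact hV.stronglyMeasurableAtFilter_nhdsWithin measurableSet_Icc x |>.filter_mono
      (by rw [nhdsWithin_eq_nhds.2 hn])
  rw [hasDerivAt_iff_tendsto_slope] at hW ⊢
  have hZx : Tendsto Z (𝓝[≠] x) (𝓝 (Z x)) :=
    (hZ.continuousAt hn).tendsto.mono_left nhdsWithin_le_nhds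
  have hlim := hW.inner (𝕜 := ℝ) (hZx.add_const (Z x))
  have he : inner ℝ (V x) (Z x + Z x) = 2 * inner ℝ (V x) (Z x) := by
    rw [inner_add_right, two_mul]
  rw [he] at hlim
  refine hlim.congr' ?_
  filter_upwards [nhdsWithin_le_nhds hn] with y hy
  simp only [slope_def_module, intervalIntegral.integral_same, sub_zero, ← h x hxI y hy,
    inner_smul_left, smul_eq_mul]
  congr 1
  rw [inner_add_right, inner_sub_left, inner_sub_left, hT (Z x) (Z y), hT (Z x) (Z x),
    real_inner_comm (T (Z y)) (Z x), hT (Z y) (Z y)]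
  ring

lemma eq_zero_of_le_mul_integral {a b K : ℝ} (hK : 0 ≤ K) {N : ℝ → ℝ}
    (hN : ContinuousOn N (Icc a b)) (hN0 : ∀ t ∈ Icc a b, 0 ≤ N t)
    (h : ∀ t ∈ Icc a b, N t ≤ K * ∫ r in t..b, N r) : ∀ t ∈ Icc a b, N t = 0 := by
  intro t ht
  have hab : a ≤ b := ht.1.trans ht.2
  have hb : b ∈ Icc a b := right_mem_Icc.2 hab
  have hint : IntegrableOn N (uIcc a b) := by
    rw [uIcc_of_le hab]
    exact hN.integrableOn_Icc
  have hQc : ContinuousOn (fun t => ∫ r in t..b, N r) (Icc a b) := by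
    have := intervalIntegral.continuousOn_primitive_interval_left hint
    rwa [uIcc_of_le hab] at this
  have hQ : ∀ x ∈ Ioo a b, HasDerivAt (fun t => Real.exp (K * t) * ∫ r in t..b, N r)
      (Real.exp (K * x) * K * (∫ r in x..b, N r) + Real.exp (K * x) * -N x) x := by
    intro x hx
    have hn : Icc a b ∈ 𝓝 x := Icc_mem_nhds hx.1 hx.2
    have h1 : HasDerivAt (fun t => ∫ r in t..b, N r) (-N x) x := by
      refine intervalIntegral.integral_hasDerivAt_left
        (hN.mono (uIcc_subset_Icc (Ioo_subset_Icc_self hx) hb)).intervalIntegrable ?_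
        (hN.continuousAt hn)
      exact hN.stronglyMeasurableAtFilter_nhdsWithin measurableSet_Icc x |>.filter_mono
        (by rw [nhdsWithin_eq_nhds.2 hn])
    have h2 : HasDerivAt (fun t => Real.exp (K * t)) (Real.exp (K * x) * K) x := by
      simpa using ((hasDerivAt_id x).const_mul K).exp
    exact h2.mul h1
  have hmono : MonotoneOn (fun t => Real.exp (K * t) * ∫ r in t..b, N r) (Icc a b) := by
    refine monotoneOn_of_deriv_nonneg (convex_Icc a b) ?_ ?_ ?_
    · exact ContinuousOn.mul (Continuous.continuousOn (by fun_prop)) hQc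
    · rw [interior_Icc]
      exact fun x hx => (hQ x hx).differentiableAt.differentiableWithinAt
    · rw [interior_Icc]
      intro x hx
      rw [(hQ x hx).deriv]
      have := h x (Ioo_subset_Icc_self hx)
      have he := Real.exp_pos (K * x)
      nlinarith
  have h0 : Real.exp (K * t) * ∫ r in t..b, N r ≤ 0 := by
    have := hmono ht hb ht.2
    simpa using this
  have h1 : ∫ r in t..b, N r ≤ 0 := nonpos_of_mul_nonpos_right h0 (Real.exp_pos _)
  have h2 : N t ≤ 0 := (h t ht).trans (mul_nonpos_of_nonneg_of_nonpos hK h1)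
  exact le_antisymm h2 (hN0 t ht)

lemma deriv_neg_of_even {g : ℝ → ℝ} (he : ∀ s, g (-s) = g s) (s : ℝ) :
    deriv g (-s) = -deriv g s := by
  have h := deriv_comp_neg g s
  simp only [he] at h
  linarith

lemma deriv_neg_of_odd {g : ℝ → ℝ} (ho : ∀ s, g (-s) = -g s) (s : ℝ) :
    deriv g (-s) = deriv g s := by
  have h := deriv_comp_neg g s
  simp only [ho, deriv.fun_neg] at h
  linarith

section Energy

variable {t₁ t₂ ε L : ℝ} {Z B : ℝ → L2R}

/-- Mollified energy estimate; the bound depends on the mollifier only through a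
scale-invariant quantity. -/
lemma abs_inner_mollify_le (hε : |ε| ≤ 1)
    (hZ : ContinuousOn Z (Icc t₁ t₂)) (hB : ContinuousOn B (Icc t₁ t₂))
    (hweak : ∀ h : ℝ → ℝ, ContDiff ℝ (⊤ : ℕ∞) h → HasCompactSupport h →
      ∀ s ∈ Icc t₁ t₂, ∀ t ∈ Icc t₁ t₂, (∫ x, Z t x * h x) - ∫ x, Z s x * h x =
        ∫ r in s..t, ((∫ x, Z r x * deriv (deriv (deriv h)) x) + ε * ∫ x, B r x * deriv h x))
    (hlip : ∀ t ∈ Icc t₁ t₂, ∀ s, |inner ℝ (transl s (B t)) (Z t)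
      - inner ℝ (transl (-s) (B t)) (Z t)| ≤ L * ‖Z t‖ ^ 2 * |s|)
    (hfin : Z t₂ = 0)
    {g : ℝ → ℝ} (hg : ContDiff ℝ (⊤ : ℕ∞) g) (hgc : HasCompactSupport g)
    (he : ∀ s, g (-s) = g s) (hi : Integrable g) {t : ℝ} (ht : t ∈ Icc t₁ t₂) :
    |inner ℝ (mollify hi (Z t)) (Z t)|
      ≤ L * (∫ s, |s| * |deriv g s|) * ∫ r in t..t₂, ‖Z r‖ ^ 2 := by
  have hdg : ContDiff ℝ (⊤ : ℕ∞) (deriv g) := (contDiff_infty_iff_deriv.1 hg).2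
  have hddg : ContDiff ℝ (⊤ : ℕ∞) (deriv (deriv g)) := (contDiff_infty_iff_deriv.1 hdg).2
  have hdddg : ContDiff ℝ (⊤ : ℕ∞) (deriv (deriv (deriv g))) :=
    (contDiff_infty_iff_deriv.1 hddg).2
  have hi1 : Integrable (deriv g) := hdg.continuous.integrable_of_hasCompactSupport hgc.deriv
  have hi3 : Integrable (deriv (deriv (deriv g))) :=
    hdddg.continuous.integrable_of_hasCompactSupport hgc.deriv.deriv.deriv
  have ho1 : ∀ s, deriv g (-s) = -deriv g s := deriv_neg_of_even he
  have ho3 : ∀ s, deriv (deriv (deriv g)) (-s) = -deriv (deriv (deriv g)) s :=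
    deriv_neg_of_even (deriv_neg_of_odd ho1)
  have hi1' : Integrable fun s => |s| * |deriv g s| :=
    (continuous_abs.mul hdg.continuous.abs).integrable_of_hasCompactSupport
      (hgc.deriv.comp_left (g := fun y : ℝ => |y|) abs_zero).mul_left
  have hV : ContinuousOn (fun r => mollify hi3 (Z r) + ε • mollify hi1 (B r)) (Icc t₁ t₂) :=
    ((mollify hi3).continuous.comp_continuousOn hZ).add
      (((mollify hi1).continuous.comp_continuousOn hB).const_smul ε)
  have hI := fun (x : ℝ) (hx : x ∈ Ioo t₁ t₂) => hasDerivAt_inner_of_sub_eq_integral (mollify hi) (inner_mollify_symm hi he) hZ hV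
    (fun s hs t ht => mollify_sub_eq_integral hZ hB hweak hg hgc hi hi1 hi3 hs ht) hx
  have hIc : ContinuousOn (fun t => inner ℝ (mollify hi (Z t)) (Z t)) (Icc t₁ t₂) :=
    ((mollify hi).continuous.comp_continuousOn hZ).inner hZ
  have hI' : ContinuousOn (fun r => 2 * inner ℝ (mollify hi3 (Z r) + ε • mollify hi1 (B r)) (Z r))
      (Icc t₁ t₂) := continuousOn_const.mul (hV.inner hZ)
  have hsub : Icc t t₂ ⊆ Icc t₁ t₂ := Icc_subset_Icc_left ht.1
  have hsub' : uIcc t t₂ ⊆ Icc t₁ t₂ := by rwa [uIcc_of_le ht.2]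
  have hftc := intervalIntegral.integral_eq_sub_of_hasDerivAt_of_le ht.2 (hIc.mono hsub)
    (fun x hx => hI x ⟨ht.1.trans_lt hx.1, hx.2⟩) (hI'.mono hsub').intervalIntegrable
  rw [hfin, inner_zero_right, zero_sub] at hftc
  rw [← abs_neg, ← hftc, ← Real.norm_eq_abs, ← intervalIntegral.integral_const_mul]
  refine intervalIntegral.norm_integral_le_of_norm_le ht.2
    (Eventually.of_forall fun r hr => ?_)
    ((continuousOn_const.mul ((hZ.norm.pow 2).mono hsub')).intervalIntegrable)
  have hr' : r ∈ Icc t₁ t₂ := hsub (Ioc_subset_Icc_self hr)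
  have h1 := abs_inner_mollify_le_of_odd hi1 ho1 hi1' (hlip r hr')
  rw [inner_add_left, inner_mollify_self_odd hi3 ho3, zero_add, real_inner_smul_left,
    Real.norm_eq_abs, abs_mul, abs_mul, abs_two]
  calc 2 * (|ε| * |inner ℝ (mollify hi1 (B r)) (Z r)|)
      ≤ 2 * (1 * |inner ℝ (mollify hi1 (B r)) (Z r)|) := by gcongr
    _ ≤ _ := by linarith

lemma exists_even_mollifier : ∃ g : ℝ → ℝ, ContDiff ℝ (⊤ : ℕ∞) g ∧ HasCompactSupport g ∧
    (∀ s, g (-s) = g s) ∧ ∫ s, g s = 1 := by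
  let φ : ContDiffBump (0 : ℝ) := default
  exact ⟨φ.normed volume, φ.contDiff_normed, φ.hasCompactSupport_normed, φ.normed_neg,
    φ.integral_normed⟩

lemma tendsto_inner_mollify {g : ℝ → ℝ} (hg : Integrable g) (hg1 : ∫ s, g s = 1)
    (hgn : ∀ n : ℕ, Integrable fun s => (n + 1 : ℝ) * g ((n + 1) * s)) (f : L2R) :
    Tendsto (fun n => inner ℝ (mollify (hgn n) f) f) atTop (𝓝 (‖f‖ ^ 2)) := by
  have e : ∀ n : ℕ, inner ℝ (mollify (hgn n) f) f
      = ∫ r, g r * inner ℝ (transl (r / (n + 1)) f) f := fun n => by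
    have hn : (0 : ℝ) < n + 1 := by positivity
    rw [inner_mollify]
    have := Measure.integral_comp_mul_left
      (fun r => g r * inner ℝ (transl (r / (n + 1)) f) f) (n + 1 : ℝ)
    rw [abs_of_pos (inv_pos.2 hn), smul_eq_mul, eq_inv_mul_iff_mul_eq₀ hn.ne',
      ← integral_const_mul] at this
    rw [← this]
    refine integral_congr_ae (Eventually.of_forall fun s => ?_)
    simp only [mul_div_cancel_left₀ s hn.ne']
    ring
  simp only [e]
  have hlim : ‖f‖ ^ 2 = ∫ r, g r * ‖f‖ ^ 2 := by rw [integral_mul_const, hg1, one_mul]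
  rw [hlim]
  refine tendsto_integral_of_dominated_convergence (fun r => ‖g r‖ * (‖f‖ * ‖f‖)) (fun n => ?_)
    (hg.norm.mul_const _) (fun n => Eventually.of_forall fun r => ?_)
    (Eventually.of_forall fun r => ?_)
  · refine hg.aestronglyMeasurable.mul (Continuous.aestronglyMeasurable ?_)
    exact ((continuous_transl f).comp (continuous_id.div_const _)).inner continuous_const
  · rw [norm_mul]
    gcongr
    exact (norm_inner_le_norm _ _).trans_eq (by rw [LinearIsometry.norm_map])
  · refine Tendsto.const_mul _ ?_
    have h0 : Tendsto (fun n : ℕ => r / ((n : ℝ) + 1)) atTop (𝓝 0) :=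
      tendsto_const_nhds.div_atTop (tendsto_atTop_add_const_right _ _ tendsto_natCast_atTop_atTop)
    have := (((continuous_transl f).tendsto 0).comp h0).inner (𝕜 := ℝ) (tendsto_const_nhds (x := f))
    rwa [transl_zero, real_inner_self_eq_norm_sq] at this

theorem eq_zero_of_weak_eq (hε : |ε| ≤ 1) (hL : 0 ≤ L)
    (hZ : ContinuousOn Z (Icc t₁ t₂)) (hB : ContinuousOn B (Icc t₁ t₂))
    (hweak : ∀ h : ℝ → ℝ, ContDiff ℝ (⊤ : ℕ∞) h → HasCompactSupport h →
      ∀ s ∈ Icc t₁ t₂, ∀ t ∈ Icc t₁ t₂, (∫ x, Z t x * h x) - ∫ x, Z s x * h x =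
        ∫ r in s..t, ((∫ x, Z r x * deriv (deriv (deriv h)) x) + ε * ∫ x, B r x * deriv h x))
    (hlip : ∀ t ∈ Icc t₁ t₂, ∀ s, |inner ℝ (transl s (B t)) (Z t)
      - inner ℝ (transl (-s) (B t)) (Z t)| ≤ L * ‖Z t‖ ^ 2 * |s|)
    (hfin : Z t₂ = 0) : ∀ t ∈ Icc t₁ t₂, Z t = 0 := by
  obtain ⟨g, hg, hgc, he, hg1⟩ := exists_even_mollifier
  have hK : 0 ≤ L * ∫ s, |s| * |deriv g s| :=
    mul_nonneg hL (integral_nonneg fun s => by positivity)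
  have hi : Integrable g := hg.continuous.integrable_of_hasCompactSupport hgc
  have hn0 : ∀ n : ℕ, (0 : ℝ) < n + 1 := fun n => by positivity
  have hgn : ∀ n : ℕ, Integrable fun s => (n + 1 : ℝ) * g ((n + 1) * s) := fun n =>
    (hi.comp_mul_left' (hn0 n).ne').const_mul _
  have hscale : ∀ n : ℕ, ∫ s, |s| * |deriv (fun s => (n + 1 : ℝ) * g ((n + 1) * s)) s|
      = ∫ s, |s| * |deriv g s| := fun n => by
    have := Measure.integral_comp_mul_left (fun s => |s| * |deriv g s|) (n + 1 : ℝ)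
    rw [abs_of_pos (inv_pos.2 (hn0 n)), smul_eq_mul, eq_inv_mul_iff_mul_eq₀ (hn0 n).ne',
      ← integral_const_mul] at this
    rw [← this]
    refine integral_congr_ae (Eventually.of_forall fun s => ?_)
    have hd : HasDerivAt (fun s => (n + 1 : ℝ) * g ((n + 1) * s))
        ((n + 1) * (deriv g ((n + 1) * s) * (n + 1))) s := by
      refine HasDerivAt.const_mul _ ?_
      refine HasDerivAt.comp s (hg.differentiable (by simp) _).hasDerivAt ?_
      simpa using (hasDerivAt_id s).const_mul (n + 1 : ℝ)
    simp only [hd.deriv, abs_mul, abs_of_pos (hn0 n)]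
    ring
  have hmain : ∀ t ∈ Icc t₁ t₂,
      ‖Z t‖ ^ 2 ≤ (L * ∫ s, |s| * |deriv g s|) * ∫ r in t..t₂, ‖Z r‖ ^ 2 := fun t ht => by
    refine le_of_tendsto' (tendsto_inner_mollify hi hg1 hgn (Z t)) fun n => ?_
    have hcs : HasCompactSupport fun s => (n + 1 : ℝ) * g ((n + 1) * s) :=
      (hgc.comp_homeomorph (Homeomorph.mulLeft₀ (n + 1 : ℝ) (hn0 n).ne')).mul_left
    have := abs_inner_mollify_le hε hZ hB hweak hlip hfin
      (g := fun s => (n + 1 : ℝ) * g ((n + 1) * s))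
      (contDiff_const.mul (hg.comp (contDiff_const.mul contDiff_id))) hcs
      (fun s => by rw [mul_neg, he]) (hgn n) ht
    rw [hscale] at this
    exact (le_abs_self _).trans this
  intro t ht
  have := eq_zero_of_le_mul_integral hK (hZ.norm.pow 2) (fun t _ => sq_nonneg _) hmain t ht
  simpa using this

end Energy

lemma ContInL2.exists_lift {I : Set ℝ} {w : ℝ → ℝ → ℝ} (hw : ContInL2 I w) :
    ∃ U : ℝ → L2R, ContinuousOn U I ∧ ∀ t ∈ I, U t =ᵐ[volume] w t := by
  classical
  refine ⟨fun t => if h : t ∈ I then (hw.1 t h).toLp else 0, fun t ht => ?_, fun t ht => ?_⟩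
  · rw [ContinuousWithinAt, tendsto_iff_edist_tendsto_0]
    refine (hw.2 t ht).congr' ?_
    filter_upwards [self_mem_nhdsWithin] with s hs
    rw [dif_pos hs, dif_pos ht, Lp.edist_toLp_toLp]
    rfl
  · simp only [dif_pos ht]
    exact MemLp.coeFn_toLp _

lemma abs_cube_sub_le {a b C : ℝ} (ha : |a| ≤ C) (hb : |b| ≤ C) :
    |a ^ 3 - b ^ 3| ≤ 3 * C ^ 2 * |a - b| := by
  have hC : 0 ≤ C := (abs_nonneg a).trans ha
  have e : a ^ 3 - b ^ 3 = (a ^ 2 + a * b + b ^ 2) * (a - b) := by ring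
  rw [e, abs_mul]
  gcongr
  calc |a ^ 2 + a * b + b ^ 2| ≤ |a ^ 2| + |a * b| + |b ^ 2| := abs_add_three _ _ _
    _ = |a| ^ 2 + |a| * |b| + |b| ^ 2 := by rw [abs_pow, abs_pow, abs_mul]
    _ ≤ C ^ 2 + C * C + C ^ 2 := by gcongr
    _ = 3 * C ^ 2 := by ring

lemma ContInL2.cube {I : Set ℝ} {w : ℝ → ℝ → ℝ} (hw : ContInL2 I w) {C : ℝ}
    (hC : ∀ t ∈ I, ∀ x, |w t x| ≤ C) : ContInL2 I fun t x => w t x ^ 3 := by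
  refine ⟨fun t ht => ?_, fun t ht => ?_⟩
  · refine (hw.1 t ht).of_le_mul (c := C ^ 2) ((hw.1 t ht).aestronglyMeasurable.pow 3)
      (Eventually.of_forall fun x => ?_)
    simp only [Real.norm_eq_abs, abs_pow]
    have := pow_le_pow_left₀ (abs_nonneg _) (hC t ht x) 2
    nlinarith [abs_nonneg (w t x)]
  · have hlim : Tendsto (fun s => ENNReal.ofReal (3 * C ^ 2) *
        eLpNorm (fun x => w s x - w t x) 2 (volume : Measure ℝ)) (𝓝[I] t) (𝓝 0) := by
      have := ENNReal.Tendsto.const_mul (a := ENNReal.ofReal (3 * C ^ 2)) (hw.2 t ht)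
        (Or.inr ENNReal.ofReal_ne_top)
      rwa [mul_zero] at this
    refine tendsto_of_tendsto_of_tendsto_of_le_of_le' tendsto_const_nhds hlim
      (Eventually.of_forall fun s => zero_le) ?_
    filter_upwards [self_mem_nhdsWithin] with s hs
    refine eLpNorm_le_mul_eLpNorm_of_ae_le_mul (Eventually.of_forall fun x => ?_) 2
    exact abs_cube_sub_le (hC s hs x) (hC t ht x)

lemma integral_mul_eq_inner (f : L2R) {h : ℝ → ℝ} (hh : MemLp h 2 (volume : Measure ℝ)) :
    ∫ x, f x * h x = inner ℝ f (hh.toLp h) := by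
  rw [inner_eq_integral]
  refine integral_congr_ae ?_
  filter_upwards [hh.coeFn_toLp] with x hx
  rw [hx]

lemma continuousOn_integral_mul {I : Set ℝ} {U : ℝ → L2R} (hU : ContinuousOn U I) {h : ℝ → ℝ}
    (hh : MemLp h 2 (volume : Measure ℝ)) : ContinuousOn (fun t => ∫ x, U t x * h x) I := by
  simp only [integral_mul_eq_inner _ hh]
  exact hU.inner continuousOn_const

/-- The equation integrated in time, tested against a function of `x` only. -/
lemma IsSolOn.sub_eq_integral {t₁ t₂ ε C M : ℝ} (h12 : t₁ < t₂) {S : ESol (Icc t₁ t₂)}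
    (hS : IsSolOn ε S.u (Icc t₁ t₂)) (hM : ∀ t ∈ Icc t₁ t₂, ∀ p, ‖S.w t p‖ ≤ M)
    (hC : ∀ t ∈ Icc t₁ t₂, ∀ x, |S.u t x| ≤ C) {U U₃ : ℝ → L2R}
    (hU : ContinuousOn U (Icc t₁ t₂)) (hUe : ∀ t ∈ Icc t₁ t₂, U t =ᵐ[volume] S.u t)
    (hU₃ : ContinuousOn U₃ (Icc t₁ t₂))
    (hUe₃ : ∀ t ∈ Icc t₁ t₂, U₃ t =ᵐ[volume] fun x => S.u t x ^ 3) {h : ℝ → ℝ}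
    (hh : ContDiff ℝ (⊤ : ℕ∞) h) (hhc : HasCompactSupport h) {s t : ℝ}
    (hs : s ∈ Icc t₁ t₂) (ht : t ∈ Icc t₁ t₂) :
    (∫ x, U t x * h x) - ∫ x, U s x * h x = ∫ r in s..t,
      ((∫ x, U r x * deriv (deriv (deriv h)) x) + ε * ∫ x, U₃ r x * deriv h x) := by
  have hdh : ContDiff ℝ (⊤ : ℕ∞) (deriv h) := (contDiff_infty_iff_deriv.1 hh).2
  have hddh : ContDiff ℝ (⊤ : ℕ∞) (deriv (deriv h)) := (contDiff_infty_iff_deriv.1 hdh).2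
  have hdddh : ContDiff ℝ (⊤ : ℕ∞) (deriv (deriv (deriv h))) :=
    (contDiff_infty_iff_deriv.1 hddh).2
  refine sub_eq_integral_of_weak_deriv h12
    (continuousOn_integral_mul hU (hh.continuous.memLp_of_hasCompactSupport hhc))
    ((continuousOn_integral_mul hU
      (hdddh.continuous.memLp_of_hasCompactSupport hhc.deriv.deriv.deriv)).add
      (continuousOn_const.mul (continuousOn_integral_mul hU₃
        (hdh.continuous.memLp_of_hasCompactSupport hhc.deriv)))) (fun η hη hηc hηs => ?_) hs ht
  rw [← hS.weak_time hM hC hh hhc hη hηc hηs]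
  refine setIntegral_congr_fun measurableSet_Icc fun r hr => ?_
  have e : ∀ {f : L2R} {f' : ℝ → ℝ} (k : ℝ → ℝ), f =ᵐ[volume] f' →
      ∫ x, f x * k x = ∫ x, f' x * k x := fun k hf => by
    refine integral_congr_ae ?_
    filter_upwards [hf] with x hx
    rw [hx]
  simp only [Pi.add_apply, Pi.mul_apply, e _ (hUe r hr), e _ (hUe₃ r hr)]

lemma abs_inner_transl_sub_le {A : ℝ → ℝ} {L : ℝ} (hA : ∀ x y, |A x - A y| ≤ L * |x - y|)
    {Z B : L2R} (hB : B =ᵐ[volume] fun x => A x * Z x) (s : ℝ) :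
    |inner ℝ (transl s B) Z - inner ℝ (transl (-s) B) Z| ≤ L * ‖Z‖ ^ 2 * |s| := by
  have hL : 0 ≤ L := by simpa using (abs_nonneg _).trans (hA 1 0)
  have hBs : ∀ᵐ x, B (s + x) = A (s + x) * Z (s + x) :=
    (measurePreserving_add_left volume s).quasiMeasurePreserving.ae hB
  have hZs : MemLp (fun x => Z (s + x)) 2 (volume : Measure ℝ) :=
    (Lp.memLp Z).comp_measurePreserving (measurePreserving_add_left volume s)
  have hBs' : MemLp (fun x => B (s + x)) 2 (volume : Measure ℝ) :=
    (Lp.memLp B).comp_measurePreserving (measurePreserving_add_left volume s)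
  have i1 : Integrable fun x => B (s + x) * Z x := hBs'.integrable_mul (Lp.memLp Z)
  have i2 : Integrable fun x => B x * Z (s + x) := (Lp.memLp B).integrable_mul hZs
  have j1 : Integrable fun x => Z x ^ 2 := (Lp.memLp Z).integrable_sq
  have j2 : Integrable fun x => Z (s + x) ^ 2 := hZs.integrable_sq
  have hZ : ∫ x, Z x ^ 2 = ‖Z‖ ^ 2 := by
    rw [← real_inner_self_eq_norm_sq, inner_eq_integral]
    simp_rw [sq]
  have hsum : ∫ x, L * |s| / 2 * (Z (s + x) ^ 2 + Z x ^ 2) = L * ‖Z‖ ^ 2 * |s| := by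
    rw [integral_const_mul, integral_add j2 j1,
      integral_add_left_eq_self (fun x => Z x ^ 2) s, hZ]
    ring
  rw [inner_transl, inner_transl_neg, ← integral_sub i1 i2, ← Real.norm_eq_abs, ← hsum]
  refine norm_integral_le_of_norm_le ((j2.add j1).const_mul _) ?_
  filter_upwards [hB, hBs] with x h1 h2
  rw [h1, h2, Real.norm_eq_abs]
  have e : A (s + x) * Z (s + x) * Z x - A x * Z x * Z (s + x)
      = (A (s + x) - A x) * (Z (s + x) * Z x) := by ring
  rw [e, abs_mul]
  have h3 : |A (s + x) - A x| ≤ L * |s| := by simpa using hA (s + x) x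
  have h4 : |Z (s + x) * Z x| ≤ (Z (s + x) ^ 2 + Z x ^ 2) / 2 := by
    rw [abs_le]
    constructor <;> nlinarith [sq_nonneg (Z (s + x) + Z x), sq_nonneg (Z (s + x) - Z x)]
  calc _ ≤ L * |s| * ((Z (s + x) ^ 2 + Z x ^ 2) / 2) := by gcongr
    _ = _ := by ring

/-- backward uniqueness with `L²` integrability. -/
theorem mkdv_backward_uniqueness_L2 (ε : ℝ) (hε : ε = 1 ∨ ε = -1)
    (t₁ t₂ : ℝ) (ht₁ : 0 < t₁) (ht₁₂ : t₁ < t₂)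
    (u v : ESol (Icc t₁ t₂))
    (hu : IsSolOn ε u.u (Icc t₁ t₂)) (hv : IsSolOn ε v.u (Icc t₁ t₂))
    (hufin : FiniteEnorm (Icc t₁ t₂) u) (hvfin : FiniteEnorm (Icc t₁ t₂) v)
    (huL2 : ContInL2 (Icc t₁ t₂) u.u) (hvL2 : ContInL2 (Icc t₁ t₂) v.u)
    (hfinal : u.u t₂ = v.u t₂) :
    ∀ t ∈ Icc t₁ t₂, u.u t = v.u t := by
  obtain ⟨Mu, Nu, hMu⟩ := hufin.exists_bounds ht₁
  obtain ⟨Mv, Nv, hMv⟩ := hvfin.exists_bounds ht₁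
  obtain ⟨M, hM⟩ : ∃ M, M = max Mu Mv := ⟨_, rfl⟩
  obtain ⟨N, hN⟩ : ∃ N, N = max Nu Nv := ⟨_, rfl⟩
  have uM : ∀ t ∈ Icc t₁ t₂, ∀ p, ‖u.w t p‖ ≤ M := fun t ht p =>
    ((hMu t ht).1 p).trans (hM ▸ le_max_left _ _)
  have vM : ∀ t ∈ Icc t₁ t₂, ∀ p, ‖v.w t p‖ ≤ M := fun t ht p =>
    ((hMv t ht).1 p).trans (hM ▸ le_max_right _ _)
  have uN : ∀ t ∈ Icc t₁ t₂, dL2 (u.w t) ^ 2 ≤ N := fun t ht =>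
    (hMu t ht).2.trans (hN ▸ le_max_left _ _)
  have vN : ∀ t ∈ Icc t₁ t₂, dL2 (v.w t) ^ 2 ≤ N := fun t ht =>
    (hMv t ht).2.trans (hN ▸ le_max_right _ _)
  have uC : ∀ t ∈ Icc t₁ t₂, ∀ x, |u.u t x| ≤ dispConst t₁ M N := fun t ht =>
    abs_phys_le ht₁ ht.1 (u.memE t ht) (uM t ht) (uN t ht) (u.isPhys t ht)
  have vC : ∀ t ∈ Icc t₁ t₂, ∀ x, |v.u t x| ≤ dispConst t₁ M N := fun t ht =>
    abs_phys_le ht₁ ht.1 (v.memE t ht) (vM t ht) (vN t ht) (v.isPhys t ht)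
  obtain ⟨U, hU, hUe⟩ := huL2.exists_lift
  obtain ⟨V, hV, hVe⟩ := hvL2.exists_lift
  obtain ⟨U₃, hU₃, hUe₃⟩ := (huL2.cube uC).exists_lift
  obtain ⟨V₃, hV₃, hVe₃⟩ := (hvL2.cube vC).exists_lift
  have hZe : ∀ t ∈ Icc t₁ t₂, (U t - V t : L2R) =ᵐ[volume] fun x => u.u t x - v.u t x :=
    fun t ht => by
      filter_upwards [Lp.coeFn_sub (U t) (V t), hUe t ht, hVe t ht] with x h1 h2 h3
      rw [h1, Pi.sub_apply, h2, h3]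
  have hlip : ∀ t ∈ Icc t₁ t₂, ∀ x y,
      |(u.u t x * u.u t x + u.u t x * v.u t x + v.u t x * v.u t x)
        - (u.u t y * u.u t y + u.u t y * v.u t y + v.u t y * v.u t y)|
      ≤ 6 * dispConst t₁ M N ^ 2 * |x - y| := fun t ht x y => by
    have h1 := phys_mul_lipschitz ht₁ ht.1 (u.memE t ht) (u.memE t ht) (uM t ht) (uN t ht)
      (uM t ht) (uN t ht) (u.isPhys t ht) (u.isPhys t ht) x y
    have h2 := phys_mul_lipschitz ht₁ ht.1 (u.memE t ht) (v.memE t ht) (uM t ht) (uN t ht)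
      (vM t ht) (vN t ht) (u.isPhys t ht) (v.isPhys t ht) x y
    have h3 := phys_mul_lipschitz ht₁ ht.1 (v.memE t ht) (v.memE t ht) (vM t ht) (vN t ht)
      (vM t ht) (vN t ht) (v.isPhys t ht) (v.isPhys t ht) x y
    rw [abs_le] at h1 h2 h3 ⊢
    constructor <;> linarith [h1.1, h1.2, h2.1, h2.2, h3.1, h3.2]
  have hZ0 := eq_zero_of_weak_eq (ε := ε) (Z := fun t => U t - V t) (B := fun t => U₃ t - V₃ t)
    (L := 6 * dispConst t₁ M N ^ 2) (by rcases hε with rfl | rfl <;> simp) (by positivity)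
    (hU.sub hV) (hU₃.sub hV₃) ?_ ?_ ?_
  · intro t ht
    have h0 : U t - V t = 0 := hZ0 t ht
    refine Continuous.ae_eq_iff_eq volume
      (phys_continuous ht₁ ht.1 (u.memE t ht) (uM t ht) (uN t ht) (u.isPhys t ht))
      (phys_continuous ht₁ ht.1 (v.memE t ht) (vM t ht) (vN t ht) (v.isPhys t ht)) |>.1 ?_
    exact (hUe t ht).symm.trans ((sub_eq_zero.1 h0) ▸ hVe t ht)
  · intro h hh hhc s hs t ht
    have hdh : ContDiff ℝ (⊤ : ℕ∞) (deriv h) := (contDiff_infty_iff_deriv.1 hh).2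
    have hddh : ContDiff ℝ (⊤ : ℕ∞) (deriv (deriv h)) := (contDiff_infty_iff_deriv.1 hdh).2
    have hdddh : ContDiff ℝ (⊤ : ℕ∞) (deriv (deriv (deriv h))) :=
      (contDiff_infty_iff_deriv.1 hddh).2
    have m0 : MemLp h 2 (volume : Measure ℝ) := hh.continuous.memLp_of_hasCompactSupport hhc
    have m1 : MemLp (deriv h) 2 (volume : Measure ℝ) :=
      hdh.continuous.memLp_of_hasCompactSupport hhc.deriv
    have m3 : MemLp (deriv (deriv (deriv h))) 2 (volume : Measure ℝ) :=
      hdddh.continuous.memLp_of_hasCompactSupport hhc.deriv.deriv.deriv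
    have ku := hu.sub_eq_integral ht₁₂ uM uC hU hUe hU₃ hUe₃ hh hhc hs ht
    have kv := hv.sub_eq_integral ht₁₂ vM vC hV hVe hV₃ hVe₃ hh hhc hs ht
    have hint : ∀ {P Q : ℝ → L2R}, ContinuousOn P (Icc t₁ t₂) → ContinuousOn Q (Icc t₁ t₂) →
        IntervalIntegrable (fun r => (∫ x, P r x * deriv (deriv (deriv h)) x)
          + ε * ∫ x, Q r x * deriv h x) volume s t := fun hP hQ =>
      (((continuousOn_integral_mul hP m3).add
        (continuousOn_const.mul (continuousOn_integral_mul hQ m1))).mono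
        (uIcc_subset_Icc hs ht)).intervalIntegrable
    have hsub := intervalIntegral.integral_sub (hint hU hU₃) (hint hV hV₃)
    rw [← ku, ← kv] at hsub
    simp only [integral_mul_eq_inner _ m0, integral_mul_eq_inner _ m1,
      integral_mul_eq_inner _ m3, inner_sub_left] at hsub ⊢
    calc _ = _ := by ring
      _ = _ := hsub.symm
      _ = _ := by
        refine intervalIntegral.integral_congr fun r _ => ?_
        ring
  · intro t ht s
    refine abs_inner_transl_sub_le (hlip t ht) ?_ s
    filter_upwards [Lp.coeFn_sub (U₃ t) (V₃ t), hUe₃ t ht, hVe₃ t ht, hZe t ht] with x h1 h2 h3 h4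
    rw [h1, Pi.sub_apply, h2, h3, h4]
    ring
  · have ht : t₂ ∈ Icc t₁ t₂ := right_mem_Icc.2 ht₁₂.le
    refine sub_eq_zero.2 (Lp.ext ((hUe t₂ ht).trans ?_))
    rw [hfinal]
    exact (hVe t₂ ht).symm

end MKdVPaper
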